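/- The conditional independence implication problem is undecidable: there is no algorithm that, given k, l ∈ ℤ>0 and sets U_i, V_i, W_i ⊆ {1,…,k} for i = 0,…,l with U_i ∩ V_i = U_i ∩ W_i = V_i ∩ W_i = ∅, decides whether the implication (⋀_{i=1}^{l} X_{U_i} ⟂ X_{V_i} | X_{W_i}) → X_{U_0} ⟂ X_{V_0} | X_{W_0} holds for all jointly-distributed random variables X_1,…,X_k with finite support. -/

import Mathlib

open scoped Classical

noncomputable section

/-- The probability of the event `S` under the probability mass function `p`. -/
def Pr {Ω : Type} (p : Ω → ℝ) (S : Set Ω) : ℝ := ∑' ω : S, p ω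

/-- `p` is a probability mass function on the sample space `Ω`. -/
def IsProb {Ω : Type} (p : Ω → ℝ) : Prop := (∀ ω, 0 ≤ p ω) ∧ Pr p Set.univ = 1

/-- The support of a random variable `X`: the set of values attained with positive
probability. -/
def supp {Ω α : Type} (p : Ω → ℝ) (X : Ω → α) : Set α := {a | 0 < Pr p {ω | X ω = a}}

/-- `X` is almost surely a function of `Y` (written `X ≤ι Y` in the paper). -/
def FuncOf {Ω α β : Type} (p : Ω → ℝ) (X : Ω → α) (Y : Ω → β) : Prop :=
  ∃ f : β → α, Pr p {ω | X ω = f (Y ω)} = 1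

/-- The random variables `X` and `Y` are independent. -/
def IndepRV {Ω α β : Type} (p : Ω → ℝ) (X : Ω → α) (Y : Ω → β) : Prop :=
  ∀ (a : α) (b : β), Pr p {ω | X ω = a ∧ Y ω = b} = Pr p {ω | X ω = a} * Pr p {ω | Y ω = b}

/-- The random variables `X`, `Y`, `Z` are mutually independent:
`X ⟂ Y` and `(X, Y) ⟂ Z`. -/
def Indep3 {Ω α β γ : Type} (p : Ω → ℝ) (X : Ω → α) (Y : Ω → β) (Z : Ω → γ) : Prop :=
  IndepRV p X Y ∧ IndepRV p (fun ω => (X ω, Y ω)) Z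

/-- The predicate `tri(X, Y, Z)`: each variable is a.s. a function of the other two, and the
three variables are pairwise independent. -/
def tri {Ω α β γ : Type} (p : Ω → ℝ) (X : Ω → α) (Y : Ω → β) (Z : Ω → γ) : Prop :=
  FuncOf p X (fun ω => (Y ω, Z ω)) ∧ FuncOf p Y (fun ω => (X ω, Z ω)) ∧
    FuncOf p Z (fun ω => (X ω, Y ω)) ∧
    IndepRV p X Y ∧ IndepRV p X Z ∧ IndepRV p Y Z


/-- The event that `X i = v i` for every index `i` in the list `S`. -/
def PatEvent {Ω : Type} {V : ℕ → Type} (X : ∀ i, Ω → V i) (S : List ℕ)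
    (v : ∀ i, V i) : Set Ω :=
  {ω | ∀ i ∈ S, X i ω = v i}

/-- Conditional independence `X_U ⟂ X_V | X_W` of the joint random variables determined by
the index lists `U, V, W`, stated in the standard form for finitely-valued random
variables: for every assignment `v` of values,
`P(X_{U∪V∪W} = v) · P(X_W = v) = P(X_{U∪W} = v) · P(X_{V∪W} = v)`. -/
def CondIndep {Ω : Type} (p : Ω → ℝ) {V : ℕ → Type} (X : ∀ i, Ω → V i)
    (U Vl W : List ℕ) : Prop :=
  ∀ v : ∀ i, V i,
    Pr p (PatEvent X (U ++ Vl ++ W) v) * Pr p (PatEvent X W v) =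
      Pr p (PatEvent X (U ++ W) v) * Pr p (PatEvent X (Vl ++ W) v)

/-- An instance of the conditional independence implication problem: `(k, t, cs)` where
`k` is the number of random variables, `t = (U₀, V₀, W₀)` is the target conditional
independence statement, and `cs` is the list `(Uᵢ, Vᵢ, Wᵢ)` for `i = 1,…,l` of hypothesis
statements. Index sets `U, V, W ⊆ {1,…,k}` are encoded as lists of naturals. -/
abbrev CIInstance : Type :=
  ℕ × (List ℕ × List ℕ × List ℕ) × List (List ℕ × List ℕ × List ℕ)

/-- The instance is valid: `k ≥ 1`, `l ≥ 1`, all index sets are contained in `{1,…,k}`,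
and within each statement the three index sets are pairwise disjoint. -/
def CIValid : CIInstance → Prop := fun inst =>
  match inst with
  | (k, t, cs) =>
    1 ≤ k ∧ 1 ≤ cs.length ∧
    ∀ s ∈ t :: cs,
      (∀ i ∈ s.1 ++ s.2.1 ++ s.2.2, 1 ≤ i ∧ i ≤ k) ∧
      (∀ i, ¬(i ∈ s.1 ∧ i ∈ s.2.1)) ∧
      (∀ i, ¬(i ∈ s.1 ∧ i ∈ s.2.2)) ∧
      (∀ i, ¬(i ∈ s.2.1 ∧ i ∈ s.2.2))

/-- The implication `(⋀_{i=1}^{l} X_{Uᵢ} ⟂ X_{Vᵢ} | X_{Wᵢ}) → X_{U₀} ⟂ X_{V₀} | X_{W₀}`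
holds for all jointly-distributed random variables `X_1, …, X_k` with finite support. -/
def CIHolds : CIInstance → Prop := fun inst =>
  match inst with
  | (_, t, cs) =>
    ∀ (Ω : Type) (p : Ω → ℝ), IsProb p →
      ∀ (V : ℕ → Type) (X : ∀ i, Ω → V i), (∀ i, (supp p (X i)).Finite) →
        (∀ s ∈ cs, CondIndep p X s.1 s.2.1 s.2.2) →
        CondIndep p X t.1 t.2.1 t.2.2

/-!
The diagonal partial recursive function with values in `{0, 1}` has no computable total extension,
so its fibres over `0` and `1` cannot be separated by a computable set. It is computed by a stack
machine. The machine is simulated by a finitely presented monoid in which the word of a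
configuration equals a fixed generator `zero` if the machine rejects; if the machine accepts, then
the number of steps that remain until acceptance gives an action in which the word differs from
`zero`, and collapsing all points that are too large for this run makes the action finite.

Word problems are turned into conditional independence implications. If `A` and `B` are
independent of all other variables given each other, then by the double Markov property only the
common part of `A` and `B`, that is, an equivalence relation on the sample points, matters for the
other variables. For such pairs, conditional independence expresses that a relation is determined
by others or combines arbitrarily with others, and this suffices to describe maps between three
sets that compose according to the relations of a monoid presentation. An identity that holds in
every monoid forces a variable to be constant; conversely, a finite monoid in which the identity
fails acts on its functions with values in `ZMod 2`, and linear maps of a uniform random triple of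
such functions refute the implication.
-/

/-! ### Finite probability -/

section Probability

variable {Ω : Type} {p : Ω → ℝ}

theorem Pr_eq_tsum_indicator (p : Ω → ℝ) (S : Set Ω) : Pr p S = ∑' ω, S.indicator p ω :=
  tsum_subtype S p

theorem IsProb.tsum_eq (hp : IsProb p) : ∑' ω, p ω = 1 := by
  simpa [Pr_eq_tsum_indicator] using hp.2

theorem IsProb.summable (hp : IsProb p) : Summable p := by
  by_contra h
  exact zero_ne_one ((tsum_eq_zero_of_not_summable h).symm.trans hp.tsum_eq)

theorem Pr_nonneg (hp : IsProb p) (S : Set Ω) : 0 ≤ Pr p S :=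
  tsum_nonneg fun ω => hp.1 ω

theorem Pr_empty (p : Ω → ℝ) : Pr p ∅ = 0 :=
  tsum_empty

theorem Pr_mono (hp : IsProb p) {S T : Set Ω} (hST : S ⊆ T) : Pr p S ≤ Pr p T := by
  simp only [Pr_eq_tsum_indicator]
  exact (hp.summable.indicator S).tsum_le_tsum
    (Set.indicator_le_indicator_of_subset hST hp.1) (hp.summable.indicator T)

theorem Pr_pos_of_mem (hp : IsProb p) {S : Set Ω} {ω : Ω} (hω : ω ∈ S) (hpos : 0 < p ω) :
    0 < Pr p S :=
  (hp.summable.subtype S).tsum_pos (fun ω => hp.1 ω.1) ⟨ω, hω⟩ hpos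

theorem exists_mem_of_Pr_pos (hp : IsProb p) {S : Set Ω} (hS : 0 < Pr p S) :
    ∃ ω ∈ S, 0 < p ω := by
  by_contra! h
  have hzero : ∀ ω : S, p ω = 0 := fun ω => le_antisymm (h ω ω.2) (hp.1 ω)
  simp [Pr, hzero] at hS

theorem exists_pos_of_isProb (hp : IsProb p) : ∃ ω, 0 < p ω :=
  let ⟨ω, _, hω⟩ := exists_mem_of_Pr_pos (S := Set.univ) hp (hp.2 ▸ one_pos)
  ⟨ω, hω⟩

theorem Pr_eq_tsum_fiber {α : Type} (hp : IsProb p) (Y : Ω → α) (S : Set Ω) :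
    Pr p S = ∑' a, Pr p (Y ⁻¹' {a} ∩ S) := by
  have hsum := (Equiv.sigmaFiberEquiv Y).summable_iff.mpr (hp.summable.indicator S)
  rw [Pr_eq_tsum_indicator, ← (Equiv.sigmaFiberEquiv Y).tsum_eq]
  refine hsum.tsum_sigma.trans (tsum_congr fun a => ?_)
  rw [Pr_eq_tsum_indicator, ← Set.indicator_indicator]
  exact tsum_subtype (Y ⁻¹' {a}) (S.indicator p)

/-- The conditional probability `P(T | S)`; it is `0` when `S` has probability `0`. -/
def condPr (p : Ω → ℝ) (S T : Set Ω) : ℝ := Pr p (S ∩ T) / Pr p S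

theorem Pr_inter_eq_mul_of_condPr_eq {α : Type} (hp : IsProb p) (Y : Ω → α) {T : Set Ω} {c : ℝ}
    (hc : ∀ ω, 0 < p ω → condPr p (Y ⁻¹' {Y ω}) T = c) (a : α) :
    Pr p (Y ⁻¹' {a} ∩ T) = Pr p (Y ⁻¹' {a}) * Pr p T := by
  have hfiber : ∀ a, Pr p (Y ⁻¹' {a} ∩ T) = Pr p (Y ⁻¹' {a}) * c := by
    intro a
    rcases (Pr_nonneg hp (Y ⁻¹' {a})).lt_or_eq with hpos | hzero
    · obtain ⟨ω, rfl, hω⟩ := exists_mem_of_Pr_pos hp hpos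
      rw [← hc ω hω, condPr, mul_div_cancel₀ _ hpos.ne']
    · rw [← hzero, zero_mul]
      exact le_antisymm (hzero ▸ Pr_mono hp Set.inter_subset_left) (Pr_nonneg hp _)
  have htotal : Pr p T = c := by
    have hone := Pr_eq_tsum_fiber hp Y Set.univ
    simp only [Set.inter_univ, hp.2] at hone
    rw [Pr_eq_tsum_fiber hp Y, tsum_congr hfiber, tsum_mul_right, ← hone, one_mul]
  rw [hfiber, htotal]

theorem condPr_eq_condPr_of_indep (hp : IsProb p) {S S' T : Set Ω} (hpos : 0 < Pr p (S ∩ S'))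
    (hS : Pr p (S ∩ T ∩ S') * Pr p S' = Pr p (S ∩ S') * Pr p (T ∩ S'))
    (hS' : Pr p (S' ∩ T ∩ S) * Pr p S = Pr p (S' ∩ S) * Pr p (T ∩ S)) :
    condPr p S T = condPr p S' T := by
  have hposS : 0 < Pr p S := hpos.trans_le (Pr_mono hp Set.inter_subset_left)
  have hposS' : 0 < Pr p S' := hpos.trans_le (Pr_mono hp Set.inter_subset_right)
  have hswap : S' ∩ T ∩ S = S ∩ T ∩ S' := by
    rw [Set.inter_assoc, Set.inter_comm, Set.inter_comm T]
  rw [hswap, Set.inter_comm S', Set.inter_comm T] at hS'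
  rw [Set.inter_comm T] at hS
  rw [condPr, condPr, div_eq_div_iff hposS.ne' hposS'.ne']
  apply mul_left_cancel₀ hpos.ne'
  linear_combination Pr p S * hS - Pr p S' * hS'

/-- The sample points of positive probability. -/
abbrev Support (p : Ω → ℝ) : Type := {ω // 0 < p ω}

/-- The Gács–Körner common part of `A` and `B`: the finest equivalence relation on the support that
identifies sample points with equal `A`-values and sample points with equal `B`-values. -/
def commonPart {α β : Type} (p : Ω → ℝ) (A : Ω → α) (B : Ω → β) : Setoid (Support p) :=
  Relation.EqvGen.setoid fun ω ω' => A ω = A ω' ∨ B ω = B ω'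

/-- The double Markov property: `P(T | A)` and `P(T | B)` coincide on the support, so this number
depends on the common part of `A` and `B` only. -/
theorem Pr_inter_eq_mul_of_double_markov {α β : Type} (hp : IsProb p) {A : Ω → α} {B : Ω → β}
    {T : Set Ω}
    (hA : ∀ a b, Pr p (A ⁻¹' {a} ∩ T ∩ B ⁻¹' {b}) * Pr p (B ⁻¹' {b}) =
      Pr p (A ⁻¹' {a} ∩ B ⁻¹' {b}) * Pr p (T ∩ B ⁻¹' {b}))
    (hB : ∀ a b, Pr p (B ⁻¹' {b} ∩ T ∩ A ⁻¹' {a}) * Pr p (A ⁻¹' {a}) =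
      Pr p (B ⁻¹' {b} ∩ A ⁻¹' {a}) * Pr p (T ∩ A ⁻¹' {a}))
    (hconn : ∀ ω ω', commonPart p A B ω ω') (a : α) :
    Pr p (A ⁻¹' {a} ∩ T) = Pr p (A ⁻¹' {a}) * Pr p T := by
  have hAB : ∀ ω : Support p, condPr p (A ⁻¹' {A ω}) T = condPr p (B ⁻¹' {B ω}) T := fun ω =>
    condPr_eq_condPr_of_indep hp (Pr_pos_of_mem hp (ω := ω.1) ⟨rfl, rfl⟩ ω.2) (hA _ _) (hB _ _)
  have hconst : ∀ ω ω' : Support p, commonPart p A B ω ω' →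
      condPr p (A ⁻¹' {A ω}) T = condPr p (A ⁻¹' {A ω'}) T := by
    intro ω ω' h
    induction h with
    | rel ω ω' h =>
      rcases h with h | h
      · rw [h]
      · rw [hAB, hAB, h]
    | refl => rfl
    | symm _ _ _ ih => exact ih.symm
    | trans _ _ _ _ _ ih ih' => exact ih.trans ih'
  obtain ⟨ω₀, hω₀⟩ := exists_pos_of_isProb hp
  exact Pr_inter_eq_mul_of_condPr_eq hp A
    (fun ω hω => hconst ⟨ω, hω⟩ ⟨ω₀, hω₀⟩ (hconn _ _)) a

end Probability

/-! ### Conditional independence -/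

section ConditionalIndependence

variable {Ω : Type} {p : Ω → ℝ} {V : ℕ → Type} {X : ∀ i, Ω → V i}

theorem patEvent_append (X : ∀ i, Ω → V i) (S T : List ℕ) (v : ∀ i, V i) :
    PatEvent X (S ++ T) v = PatEvent X S v ∩ PatEvent X T v := by
  ext ω
  simp only [PatEvent, Set.mem_ofPred_eq, List.forall_mem_append, Set.mem_inter_iff]

theorem patEvent_nil (X : ∀ i, Ω → V i) (v : ∀ i, V i) : PatEvent X [] v = Set.univ := by
  simp [PatEvent]

theorem patEvent_singleton (X : ∀ i, Ω → V i) (a : ℕ) (v : ∀ i, V i) :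
    PatEvent X [a] v = X a ⁻¹' {v a} := by
  ext ω
  simp [PatEvent]

theorem patEvent_congr (X : ∀ i, Ω → V i) {S : List ℕ} {v w : ∀ i, V i}
    (h : ∀ i ∈ S, v i = w i) : PatEvent X S v = PatEvent X S w :=
  Set.ext fun _ => forall₂_congr fun i hi => by rw [h i hi]

theorem CondIndep.exchange (hp : IsProb p) {U Vl W : List ℕ} (h : CondIndep p X U Vl W)
    (hUV : ∀ i ∈ U, i ∉ Vl) {ω ω' : Ω} (hω : 0 < p ω) (hω' : 0 < p ω')
    (hW : ∀ i ∈ W, X i ω = X i ω') :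
    ∃ ω'', 0 < p ω'' ∧ (∀ i ∈ U, X i ω'' = X i ω) ∧ (∀ i ∈ Vl, X i ω'' = X i ω') ∧
      ∀ i ∈ W, X i ω'' = X i ω := by
  let v : ∀ i, V i := fun i => if i ∈ U then X i ω else X i ω'
  have hvU : ∀ i ∈ U, X i ω = v i := fun i hi => (if_pos hi).symm
  have hvV : ∀ i ∈ Vl, X i ω' = v i := fun i hi => (if_neg fun hU => hUV i hU hi).symm
  have hvW : ∀ i ∈ W, X i ω = v i ∧ X i ω' = v i := fun i hi => by
    by_cases hU : i ∈ U <;> simp [v, hU, hW i hi]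
  have hUW : 0 < Pr p (PatEvent X (U ++ W) v) := Pr_pos_of_mem hp
    (List.forall_mem_append.2 ⟨hvU, fun i hi => (hvW i hi).1⟩) hω
  have hVW : 0 < Pr p (PatEvent X (Vl ++ W) v) := Pr_pos_of_mem hp
    (List.forall_mem_append.2 ⟨hvV, fun i hi => (hvW i hi).2⟩) hω'
  have hUVW : 0 < Pr p (PatEvent X (U ++ Vl ++ W) v) :=
    pos_of_mul_pos_left ((h v).symm ▸ mul_pos hUW hVW) (Pr_nonneg hp _)
  obtain ⟨ω'', hω'', hpos⟩ := exists_mem_of_Pr_pos hp hUVW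
  refine ⟨ω'', hpos, fun i hi => ?_, fun i hi => ?_, fun i hi => ?_⟩
  · rw [hω'' i (by simp [hi]), hvU i hi]
  · rw [hω'' i (by simp [hi]), hvV i hi]
  · rw [hω'' i (by simp [hi]), (hvW i hi).1]

theorem Pr_inter_mul_eq_of_condIndep {a b : ℕ} {L : List ℕ} (ha : a ∉ L) (hb : b ∉ L)
    (hab : a ≠ b) (h : CondIndep p X [a] L [b]) (v : ∀ i, V i) (x : V a) (y : V b) :
    Pr p (X a ⁻¹' {x} ∩ PatEvent X L v ∩ X b ⁻¹' {y}) * Pr p (X b ⁻¹' {y}) =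
      Pr p (X a ⁻¹' {x} ∩ X b ⁻¹' {y}) * Pr p (PatEvent X L v ∩ X b ⁻¹' {y}) := by
  let w : ∀ i, V i := Function.update (Function.update v a x) b y
  have hwa : w a = x := by simp [w, hab]
  have hwb : w b = y := by simp [w]
  have hwL : PatEvent X L w = PatEvent X L v := patEvent_congr X fun i hi => by
    simp [w, show i ≠ a by grind, show i ≠ b by grind]
  simpa only [patEvent_append, patEvent_singleton, hwa, hwb, hwL] using h w

theorem condIndep_of_double_markov (hp : IsProb p) {a b : ℕ} {L : List ℕ} (ha : a ∉ L)
    (hb : b ∉ L) (hab : a ≠ b) (hA : CondIndep p X [a] L [b]) (hB : CondIndep p X [b] L [a])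
    (hconn : ∀ ω ω', commonPart p (X a) (X b) ω ω') : CondIndep p X [a] L [] := by
  intro v
  rw [patEvent_nil, hp.2, List.append_nil, List.append_nil, List.append_nil, patEvent_append,
    patEvent_singleton, mul_one]
  exact Pr_inter_eq_mul_of_double_markov hp
    (fun x y => Pr_inter_mul_eq_of_condIndep ha hb hab hA v x y)
    (fun x y => Pr_inter_mul_eq_of_condIndep hb ha hab.symm hB v y x) hconn (v a)

theorem condIndep_of_determined (p : Ω → ℝ) {U Vl W : List ℕ}
    (h : ∀ ω ω', (∀ i ∈ W, X i ω = X i ω') → ∀ i ∈ U, X i ω = X i ω') :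
    CondIndep p X U Vl W := by
  intro v
  simp only [patEvent_append]
  rcases (PatEvent X U v ∩ PatEvent X W v).eq_empty_or_nonempty with hempty | ⟨ω, hU, hW⟩
  · rw [Set.inter_right_comm, hempty, Set.empty_inter, Pr_empty, zero_mul, zero_mul]
  · have hWU : PatEvent X W v ⊆ PatEvent X U v := fun ω' hω' i hi =>
      (h ω' ω (fun j hj => (hω' j hj).trans (hW j hj).symm) i hi).trans (hU i hi)
    rw [Set.inter_right_comm, Set.inter_eq_right.2 hWU, Set.inter_comm (PatEvent X W v), mul_comm]

end ConditionalIndependence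

section Uniform

/-- The uniform probability mass function on a finite type. -/
def uniformPr (G : Type) : G → ℝ := fun _ => (Nat.card G : ℝ)⁻¹

theorem Pr_uniformPr_preimage {G : Type} (e : G ≃ G) (S : Set G) :
    Pr (uniformPr G) (e ⁻¹' S) = Pr (uniformPr G) S := by
  simp only [Pr_eq_tsum_indicator]
  exact e.tsum_eq (S.indicator (uniformPr G))

variable {G : Type} [Finite G]

theorem uniformPr_pos (g : G) : 0 < uniformPr G g :=
  have : Nonempty G := ⟨g⟩
  inv_pos.2 (Nat.cast_pos.2 Nat.card_pos)

theorem isProb_uniformPr [Nonempty G] : IsProb (uniformPr G) := by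
  refine ⟨fun g => (uniformPr_pos g).le, ?_⟩
  have := Fintype.ofFinite G
  simp [Pr_eq_tsum_indicator, uniformPr]

variable [AddGroup G]

theorem Pr_inter_eq_mul_of_translation {M : Type} [AddGroup M] (f : G →+ M) {T : Set G}
    (hT : ∀ g, ∃ k, f k = f g ∧ ∀ x, x + k ∈ T ↔ x ∈ T) (a : M) :
    Pr (uniformPr G) (f ⁻¹' {a} ∩ T) = Pr (uniformPr G) (f ⁻¹' {a}) * Pr (uniformPr G) T := by
  refine Pr_inter_eq_mul_of_condPr_eq isProb_uniformPr f
    (c := condPr (uniformPr G) (f ⁻¹' {0}) T) (fun g _ => ?_) a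
  obtain ⟨k, hk, hTk⟩ := hT g
  have hfiber : Equiv.addRight k ⁻¹' (f ⁻¹' {f g}) = f ⁻¹' {0} := by
    ext x
    simp [hk]
  have hinter : Equiv.addRight k ⁻¹' (f ⁻¹' {f g} ∩ T) = f ⁻¹' {0} ∩ T := by
    rw [Set.preimage_inter, hfiber]
    congr 1
    exact Set.ext hTk
  rw [condPr, condPr, ← hfiber, ← Pr_uniformPr_preimage (Equiv.addRight k) (f ⁻¹' {f g} ∩ T),
    hinter, hfiber, ← hfiber, Pr_uniformPr_preimage]

theorem condIndep_uniformPr {M : ℕ → Type} [∀ i, AddGroup (M i)] (X : ∀ i, G →+ M i) {a : ℕ}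
    {L : List ℕ} (h : ∀ g, ∃ k, X a k = X a g ∧ ∀ i ∈ L, X i k = 0) :
    CondIndep (uniformPr G) (fun i => X i) [a] L [] := by
  intro v
  rw [patEvent_nil, isProb_uniformPr.2, List.append_nil, List.append_nil, List.append_nil,
    patEvent_append, patEvent_singleton, mul_one]
  refine Pr_inter_eq_mul_of_translation (X a) (fun g => ?_) (v a)
  obtain ⟨k, hk, hL⟩ := h g
  exact ⟨k, hk, fun x => forall₂_congr fun i hi => by simp [hL i hi]⟩

end Uniform

/-! ### From combinatorial constraints to conditional independence statements -/

/-- A triple `(U, V, W)` of index lists, standing for `X_U ⟂ X_V | X_W`. -/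
abbrev CIStatement : Type := List ℕ × List ℕ × List ℕ

/-- A constraint on a family of equivalence relations (the variables) on a set of sample points:
either the value of `z` is determined by the values of the variables in `l`, or it can be combined
arbitrarily with them. -/
inductive Constraint (ι : Type)
  | determined (z : ι) (l : List ι)
  | indep (z : ι) (l : List ι)

namespace Constraint

variable {ι κ S : Type}

/-- The meaning of a constraint: points related by `E i` have the same value of the variable `i`. -/
def Holds (E : ι → Setoid S) : Constraint ι → Prop
  | determined z l => ∀ ω ω', (∀ i ∈ l, E i ω ω') → E z ω ω'
  | indep z l => ∀ ω ω', ∃ ω'', E z ω'' ω ∧ ∀ i ∈ l, E i ω'' ω'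

/-- Renaming of the variables of a constraint. -/
def map (f : ι → κ) : Constraint ι → Constraint κ
  | determined z l => determined (f z) (l.map f)
  | indep z l => indep (f z) (l.map f)

theorem holds_map (f : ι → κ) (E : κ → Setoid S) (c : Constraint ι) :
    (c.map f).Holds E ↔ c.Holds fun i => E (f i) := by
  cases c <;> simp [map, Holds]

/-- The variables of the constraint are less than `N`, and `z` is not among the `l`. -/
def WellFormed (N : ℕ) : Constraint ℕ → Prop
  | determined z l | indep z l => z < N ∧ ∀ i ∈ l, i < N ∧ i ≠ z

end Constraint

/-- The first of the two random variables representing the variable `i`. -/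
def copyA (i : ℕ) : ℕ := 2 * i + 1

/-- The second of the two random variables representing the variable `i`. -/
def copyB (i : ℕ) : ℕ := 2 * i + 2

/-- Both copies of all variables less than `N` other than `i`. -/
def otherCopies (N i : ℕ) : List ℕ :=
  (List.range N).flatMap fun j => if j = i then [] else [copyA j, copyB j]

/-- Each copy of `i` is independent of all the other variables given the other copy, so only the
common part of the two copies matters. -/
def copyStatements (N i : ℕ) : List CIStatement :=
  [([copyA i], otherCopies N i, [copyB i]), ([copyB i], otherCopies N i, [copyA i])]

/-- The statement expressing a constraint: `z` is determined by `l` when its two copies are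
independent given `l`. -/
def Constraint.toCI : Constraint ℕ → CIStatement
  | determined z l => ([copyA z], [copyB z], l.map copyA)
  | indep z l => ([copyA z], l.map copyA, [])

/-- The instance expressing that the constraints `C` on `N` variables force the variable `d` to be
constant. -/
def gadgetInstance (N d : ℕ) (C : List (Constraint ℕ)) : CIInstance :=
  (2 * N, ([copyA d], otherCopies N d, []),
    (List.range N).flatMap (copyStatements N) ++ C.map Constraint.toCI)

theorem mem_otherCopies {N i x : ℕ} :
    x ∈ otherCopies N i ↔ ∃ j < N, j ≠ i ∧ (x = copyA j ∨ x = copyB j) := by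
  simp only [otherCopies, List.mem_flatMap, List.mem_range]
  refine exists_congr fun j => and_congr_right fun _ => ?_
  by_cases h : j = i <;> simp [h]

theorem copyA_notMem_otherCopies (N i : ℕ) : copyA i ∉ otherCopies N i := by
  simp only [mem_otherCopies, copyA, copyB]
  lia

theorem copyB_notMem_otherCopies (N i : ℕ) : copyB i ∉ otherCopies N i := by
  simp only [mem_otherCopies, copyA, copyB]
  lia

theorem copyA_ne_copyB (i j : ℕ) : copyA i ≠ copyB j := by
  simp only [copyA, copyB]
  lia

/-- The condition that `CIValid` imposes on each statement of an instance. -/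
def StatementValid (k : ℕ) (s : CIStatement) : Prop :=
  (∀ i ∈ s.1 ++ s.2.1 ++ s.2.2, 1 ≤ i ∧ i ≤ k) ∧
    (∀ i, ¬(i ∈ s.1 ∧ i ∈ s.2.1)) ∧ (∀ i, ¬(i ∈ s.1 ∧ i ∈ s.2.2)) ∧ ∀ i, ¬(i ∈ s.2.1 ∧ i ∈ s.2.2)

theorem statementValid_of_mem_copyStatements {N i : ℕ} (hi : i < N) {s : CIStatement}
    (hs : s ∈ copyStatements N i) : StatementValid (2 * N) s := by
  simp only [copyStatements, List.mem_cons, List.not_mem_nil, or_false] at hs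
  rcases hs with rfl | rfl <;> simp only [StatementValid, List.mem_append, List.mem_singleton,
    mem_otherCopies, copyA, copyB] <;> grind

theorem Constraint.WellFormed.statementValid {N : ℕ} {c : Constraint ℕ} (hc : c.WellFormed N) :
    StatementValid (2 * N) c.toCI := by
  cases c <;> simp only [WellFormed] at hc <;> simp only [toCI, StatementValid, List.mem_append,
    List.mem_singleton, List.mem_map, List.not_mem_nil, copyA, copyB] <;> grind

theorem ciValid_gadgetInstance {N d : ℕ} {C : List (Constraint ℕ)} (hd : d < N)
    (hC : ∀ c ∈ C, c.WellFormed N) : CIValid (gadgetInstance N d C) := by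
  have hcopy : ([copyA d], otherCopies N d, [copyB d]) ∈
      (List.range N).flatMap (copyStatements N) :=
    List.mem_flatMap.2 ⟨d, List.mem_range.2 hd, List.mem_cons_self⟩
  refine ⟨by lia, List.length_pos_of_mem (List.mem_append_left _ hcopy), fun s hs => ?_⟩
  change StatementValid (2 * N) s
  simp only [List.mem_cons, List.mem_append, List.mem_flatMap, List.mem_range, List.mem_map] at hs
  rcases hs with rfl | ⟨i, hi, hs⟩ | ⟨c, hc, rfl⟩
  · simp only [StatementValid, List.mem_append, List.mem_singleton, mem_otherCopies, copyA, copyB]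
    grind
  · exact statementValid_of_mem_copyStatements hi hs
  · exact (hC c hc).statementValid

section Soundness

variable {Ω : Type} {p : Ω → ℝ} {V : ℕ → Type} {X : ∀ i, Ω → V i} {N : ℕ}

/-- The variable represented by the two copies of `i`: their common part. -/
def copySetoid (p : Ω → ℝ) (X : ∀ i, Ω → V i) (i : ℕ) : Setoid (Support p) :=
  commonPart p (X (copyA i)) (X (copyB i))

theorem copySetoid_of_copyA_eq {i : ℕ} {ω ω' : Support p}
    (h : X (copyA i) ω = X (copyA i) ω') : copySetoid p X i ω ω' :=
  .rel _ _ (.inl h)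

theorem copySetoid_of_copyB_eq {i : ℕ} {ω ω' : Support p}
    (h : X (copyB i) ω = X (copyB i) ω') : copySetoid p X i ω ω' :=
  .rel _ _ (.inr h)

theorem exists_replace_copyA (hp : IsProb p) {i : ℕ}
    (hcopy : ∀ s ∈ copyStatements N i, CondIndep p X s.1 s.2.1 s.2.2)
    {ω ω' : Support p} (hωω' : copySetoid p X i ω ω') :
    ∃ ξ : Support p, X (copyA i) ξ = X (copyA i) ω' ∧ ∀ x ∈ otherCopies N i, X x ξ = X x ω := by
  have hA : CondIndep p X [copyA i] (otherCopies N i) [copyB i] :=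
    hcopy _ List.mem_cons_self
  have hB : CondIndep p X [copyB i] (otherCopies N i) [copyA i] :=
    hcopy _ (List.mem_cons_of_mem _ List.mem_cons_self)
  -- the values of the other copies that occur together with the value of `copyA i` at `η`
  let compatible (η : Support p) : Set (Support p) :=
    {ζ | ∃ ξ : Support p, X (copyA i) ξ = X (copyA i) η ∧ ∀ x ∈ otherCopies N i, X x ξ = X x ζ}
  have hmono : ∀ η η' : Support p, X (copyA i) η = X (copyA i) η' ∨ X (copyB i) η = X (copyB i) η' →
      compatible η ⊆ compatible η' := by
    rintro η η' (h | h) ζ ⟨ξ, hξA, hξ⟩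
    · exact ⟨ξ, hξA.trans h, hξ⟩
    obtain ⟨ξ₁, hpos₁, hB₁, hrest₁, -⟩ := hB.exchange hp
      (by simpa using copyB_notMem_otherCopies N i) η.2 ξ.2 (by simpa using hξA.symm)
    obtain ⟨ξ₂, hpos₂, hA₂, hrest₂, -⟩ := hA.exchange hp
      (by simpa using copyA_notMem_otherCopies N i) η'.2 hpos₁
      (by simpa using h.symm.trans (hB₁ _ List.mem_cons_self).symm)
    exact ⟨⟨ξ₂, hpos₂⟩, hA₂ _ List.mem_cons_self,
      fun x hx => (hrest₂ x hx).trans ((hrest₁ x hx).trans (hξ x hx))⟩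
  have hker : copySetoid p X i ≤ Setoid.ker compatible := Setoid.eqvGen_le fun η η' h =>
    (hmono η η' h).antisymm (hmono η' η (h.imp Eq.symm Eq.symm))
  have hmem : ω ∈ compatible ω := ⟨ω, rfl, fun _ _ => rfl⟩
  rwa [show compatible ω = compatible ω' from hker hωω'] at hmem

theorem exists_replace_copyA_list (hp : IsProb p)
    (hcopy : ∀ i < N, ∀ s ∈ copyStatements N i, CondIndep p X s.1 s.2.1 s.2.2) {l : List ℕ}
    (hl : ∀ i ∈ l, i < N) {ω ω' : Support p} (hωω' : ∀ i ∈ l, copySetoid p X i ω ω') :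
    ∃ ξ : Support p, (∀ i ∈ l, X (copyA i) ξ = X (copyA i) ω') ∧
      ∀ j < N, j ∉ l → X (copyA j) ξ = X (copyA j) ω ∧ X (copyB j) ξ = X (copyB j) ω := by
  induction l with
  | nil => exact ⟨ω, by simp, by simp⟩
  | cons i l ih =>
    rw [List.forall_mem_cons] at hl hωω'
    obtain ⟨ξ, hξl, hξ⟩ := ih hl.2 hωω'.2
    by_cases hil : i ∈ l
    · refine ⟨ξ, List.forall_mem_cons.2 ⟨hξl i hil, hξl⟩, fun j hj hjl => ?_⟩
      exact hξ j hj fun h => hjl (List.mem_cons_of_mem _ h)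
    have hξω' : copySetoid p X i ξ ω' :=
      (copySetoid p X i).trans' (copySetoid_of_copyA_eq (hξ i hl.1 hil).1) hωω'.1
    obtain ⟨η, hηi, hη⟩ := exists_replace_copyA hp (hcopy i hl.1) hξω'
    have hηξ : ∀ j < N, j ≠ i → X (copyA j) η = X (copyA j) ξ ∧ X (copyB j) η = X (copyB j) ξ :=
      fun j hj hji => ⟨hη _ (mem_otherCopies.2 ⟨j, hj, hji, .inl rfl⟩),
        hη _ (mem_otherCopies.2 ⟨j, hj, hji, .inr rfl⟩)⟩
    refine ⟨η, List.forall_mem_cons.2 ⟨hηi, fun j hj => ?_⟩, fun j hj hjl => ?_⟩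
    · exact (hηξ j (hl.2 j hj) (by rintro rfl; exact hil hj)).1.trans (hξl j hj)
    · rw [List.mem_cons, not_or] at hjl
      exact ⟨(hηξ j hj hjl.1).1.trans (hξ j hj hjl.2).1, (hηξ j hj hjl.1).2.trans (hξ j hj hjl.2).2⟩

theorem Constraint.holds_copySetoid (hp : IsProb p)
    (hcopy : ∀ i < N, ∀ s ∈ copyStatements N i, CondIndep p X s.1 s.2.1 s.2.2)
    {c : Constraint ℕ} (hwf : c.WellFormed N) (hc : CondIndep p X c.toCI.1 c.toCI.2.1 c.toCI.2.2) :
    c.Holds (copySetoid p X) := by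
  rcases c with ⟨z, l⟩ | ⟨z, l⟩ <;> obtain ⟨hz, hl⟩ := hwf <;> intro ω ω'
  · intro hωω'
    obtain ⟨ξ, hξl, hξ⟩ := exists_replace_copyA_list hp hcopy (fun i hi => (hl i hi).1) hωω'
    obtain ⟨η, hpos, hηA, hηB, -⟩ := hc.exchange hp (by simpa [toCI] using copyA_ne_copyB z z)
      ξ.2 ω'.2 (by simpa [toCI] using hξl)
    have hωη : copySetoid p X z ω ⟨η, hpos⟩ := copySetoid_of_copyA_eq
      ((hηA _ List.mem_cons_self).trans (hξ z hz fun h => (hl z h).2 rfl).1).symm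
    exact (copySetoid p X z).trans' hωη (copySetoid_of_copyB_eq (hηB _ List.mem_cons_self))
  · have hdisj : ∀ i ∈ [copyA z], i ∉ l.map copyA := by
      simp only [List.mem_singleton, List.mem_map, copyA]
      grind
    obtain ⟨η, hpos, hηz, hηl, -⟩ := hc.exchange hp hdisj ω.2 ω'.2 (by simp [toCI])
    exact ⟨⟨η, hpos⟩, copySetoid_of_copyA_eq (hηz _ List.mem_cons_self),
      fun i hi => copySetoid_of_copyA_eq (hηl _ (List.mem_map_of_mem hi))⟩

end Soundness

theorem ciHolds_gadgetInstance {N d : ℕ} {C : List (Constraint ℕ)} (hd : d < N)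
    (hwf : ∀ c ∈ C, c.WellFormed N)
    (hforce : ∀ (S : Type) (E : ℕ → Setoid S), (∀ c ∈ C, c.Holds E) → ∀ ω ω', E d ω ω') :
    CIHolds (gadgetInstance N d C) := by
  intro Ω p hp V X _ hX
  rw [List.forall_mem_append, List.forall_mem_flatMap, List.forall_mem_map] at hX
  obtain ⟨hcopy, hC⟩ := hX
  simp only [List.mem_range] at hcopy
  have hconst := hforce _ (copySetoid p X)
    fun c hc => c.holds_copySetoid hp hcopy (hwf c hc) (hC c hc)
  exact condIndep_of_double_markov hp (copyA_notMem_otherCopies N d)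
    (copyB_notMem_otherCopies N d) (copyA_ne_copyB d d) (hcopy d hd _ List.mem_cons_self)
    (hcopy d hd _ (List.mem_cons_of_mem _ List.mem_cons_self)) hconst

section Completeness

variable {G M : Type} [AddGroup G] [AddGroup M]

/-- The random variable indexed by `n` when both copies of each variable `i` are `K i`. -/
def duplicate (K : ℕ → G →+ M) (n : ℕ) : G →+ M := K ((n - 1) / 2)

theorem duplicate_copyA (K : ℕ → G →+ M) (i : ℕ) : duplicate K (copyA i) = K i := by
  simp [duplicate, copyA]

theorem duplicate_copyB (K : ℕ → G →+ M) (i : ℕ) : duplicate K (copyB i) = K i := by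
  rw [duplicate, copyB, show (2 * i + 2 - 1) / 2 = i by lia]

theorem condIndep_of_mem_copyStatements_duplicate (K : ℕ → G →+ M) {N i : ℕ} {s : CIStatement}
    (hs : s ∈ copyStatements N i) :
    CondIndep (uniformPr G) (fun n => duplicate K n) s.1 s.2.1 s.2.2 := by
  simp only [copyStatements, List.mem_cons, List.not_mem_nil, or_false] at hs
  rcases hs with rfl | rfl <;>
    exact condIndep_of_determined _ (by simp [duplicate_copyA, duplicate_copyB])

variable [Finite G]

theorem Constraint.Holds.condIndep_duplicate {K : ℕ → G →+ M} {c : Constraint ℕ}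
    (hc : c.Holds fun i => Setoid.ker (K i)) :
    CondIndep (uniformPr G) (fun n => duplicate K n) c.toCI.1 c.toCI.2.1 c.toCI.2.2 := by
  rcases c with ⟨z, l⟩ | ⟨z, l⟩
  · refine condIndep_of_determined _ fun g g' hgg' => ?_
    simp only [toCI, List.forall_mem_map, List.forall_mem_singleton, duplicate_copyA] at hgg' ⊢
    exact hc g g' hgg'
  · refine condIndep_uniformPr (duplicate K) fun g => ?_
    obtain ⟨k, hkz, hkl⟩ := hc g 0
    refine ⟨k, by rw [duplicate_copyA]; exact hkz, List.forall_mem_map.2 fun i hi => ?_⟩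
    rw [duplicate_copyA]
    exact (hkl i hi).trans (map_zero _)

theorem not_ciHolds_gadgetInstance {N d i : ℕ} {C : List (Constraint ℕ)} (K : ℕ → G →+ M)
    (hC : ∀ c ∈ C, c.Holds fun i => Setoid.ker (K i)) (hi : i < N) (hid : i ≠ d)
    (hker : ∀ g, K i g = 0 → K d g = 0) (hd : K d ≠ 0) : ¬ CIHolds (gadgetInstance N d C) := by
  intro hholds
  have hind : CondIndep (uniformPr G) (fun n => duplicate K n) [copyA d] (otherCopies N d) [] := by
    refine hholds G (uniformPr G) isProb_uniformPr (fun _ => M) (fun n => duplicate K n)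
      (fun n => (Set.finite_range (duplicate K n)).subset fun x hx => ?_) fun s hs => ?_
    · obtain ⟨g, hg, -⟩ := exists_mem_of_Pr_pos isProb_uniformPr hx
      exact ⟨g, hg⟩
    · simp only [List.mem_append, List.mem_flatMap, List.mem_map] at hs
      rcases hs with ⟨j, -, hs⟩ | ⟨c, hc, rfl⟩
      · exact condIndep_of_mem_copyStatements_duplicate K hs
      · exact (hC c hc).condIndep_duplicate
  refine hd (AddMonoidHom.ext fun g => ?_)
  obtain ⟨k, -, hkd, hki, -⟩ := hind.exchange isProb_uniformPr
    (by simpa using copyA_notMem_otherCopies N d) (uniformPr_pos g) (uniformPr_pos 0) (by simp)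
  have hkd : K d k = K d g := by simpa [duplicate_copyA] using hkd
  have hki : K i k = 0 := by
    simpa [duplicate_copyA] using hki (copyA i) (mem_otherCopies.2 ⟨i, hi, hid, .inl rfl⟩)
  rw [← hkd, hker k hki, AddMonoidHom.zero_apply]

end Completeness

/-! ### From monoid presentations to constraints -/

/-- `γ` represents the generators `G` in the monoid `M`: it sends `one` to the identity, and
satisfies `γ k = γ g * γ h` for each relation `Rel k g h`. -/
def IsModel {G M : Type} [Monoid M] (one : G) (Rel : G → G → G → Prop) (γ : G → M) : Prop :=
  γ one = 1 ∧ ∀ k g h, Rel k g h → γ k = γ g * γ h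

/-- A word problem for a monoid presentation with generators `0, …, numGens - 1`, where `0` is the
identity, relations `k = g * h` for `(k, g, h)` in `rels`, and the question whether `lhs = rhs`. -/
structure Presentation where
  numGens : ℕ
  rels : List (ℕ × ℕ × ℕ)
  lhs : ℕ
  rhs : ℕ

namespace Presentation

/-- Only the generators `0, …, numGens - 1` occur in the presentation. -/
structure WellFormed (P : Presentation) : Prop where
  lhs_lt : P.lhs < P.numGens
  rhs_lt : P.rhs < P.numGens
  rels_lt : ∀ t ∈ P.rels, t.1 < P.numGens ∧ t.2.1 < P.numGens ∧ t.2.2 < P.numGens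

/-- The relations of the presentation, as a predicate. -/
def Rel (P : Presentation) (k g h : ℕ) : Prop := (k, g, h) ∈ P.rels

end Presentation

/-- The variables of the constraint system of a presentation. The variables `pt₁`, `pt₂`, `pt₃` are
independent and play the role of points of three sets; fixing the value of `map₁₂ g`, say, selects
the graph of a map from the first set to the second, by which the generator `g` acts. The variable
`diff` records the difference of the actions of `lhs` and `rhs`. -/
inductive BaseVar
  | pt₁ | pt₂ | pt₃ | diff
  | map₁₂ (g : ℕ) | map₁₃ (g : ℕ) | map₂₃ (g : ℕ)

namespace BaseVar

/-- The numbering of the variables. -/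
def index : BaseVar → ℕ
  | pt₁ => 0
  | pt₂ => 1
  | pt₃ => 2
  | diff => 3
  | map₁₂ g => 3 * g + 4
  | map₁₃ g => 3 * g + 5
  | map₂₃ g => 3 * g + 6

theorem index_injective : Function.Injective index := by
  intro v w h
  cases v <;> cases w <;> simp only [index] at h <;> first | rfl | lia | (congr 1; lia)

theorem index_surjective : Function.Surjective index
  | 0 => ⟨pt₁, rfl⟩
  | 1 => ⟨pt₂, rfl⟩
  | 2 => ⟨pt₃, rfl⟩
  | 3 => ⟨diff, rfl⟩
  | n + 4 => by
    have hn : n % 3 = 0 ∨ n % 3 = 1 ∨ n % 3 = 2 := by lia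
    rcases hn with hn | hn | hn
    · exact ⟨map₁₂ (n / 3), by simp only [index]; lia⟩
    · exact ⟨map₁₃ (n / 3), by simp only [index]; lia⟩
    · exact ⟨map₂₃ (n / 3), by simp only [index]; lia⟩

/-- The numbering of the variables, as an equivalence. -/
def equivNat : BaseVar ≃ ℕ := Equiv.ofBijective index ⟨index_injective, index_surjective⟩

end BaseVar

section ConstraintSystem

open BaseVar Constraint

/-- Each value of `m` is the graph of a map from the values of `a` to the values of `b`. -/
def mapConstraints (a b m : BaseVar) : List (Constraint BaseVar) :=
  [determined m [a, b], determined b [a, m], indep m [a]]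

/-- The relation `k = g * h` for `t = (k, g, h)`: the map `k` from the first to the third set is the
composite of `h` from the first to the second and `g` from the second to the third. -/
def relConstraint (t : ℕ × ℕ × ℕ) : Constraint BaseVar :=
  determined (map₁₃ t.1) [map₁₂ t.2.2, map₂₃ t.2.1]

/-- The constraints on the three actions of the generator `g`. The relations `g = g * 0 = 0 * g`
identify these actions when the three sets are identified by means of the generator `0`. -/
def genConstraints (g : ℕ) : List (Constraint BaseVar) :=
  mapConstraints pt₁ pt₂ (map₁₂ g) ++ mapConstraints pt₁ pt₃ (map₁₃ g) ++
    mapConstraints pt₂ pt₃ (map₂₃ g) ++ [relConstraint (g, g, 0), relConstraint (g, 0, g)]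

/-- The three points are independent, and the generator `0` acts bijectively from the first set to
the second and injectively from the second to the third. -/
def pointConstraints : List (Constraint BaseVar) :=
  [indep pt₁ [pt₂, pt₃], indep pt₂ [pt₃], determined pt₂ [map₂₃ 0, pt₃], indep (map₁₂ 0) [pt₂],
    determined pt₁ [map₁₂ 0, pt₂]]

/-- The constraints on the variable `diff`; they force it to be constant once `u` and `s` act
identically. -/
def diffConstraints (u s : ℕ) : List (Constraint BaseVar) :=
  [determined diff [pt₁], determined diff [map₁₂ u, map₁₂ s]]

namespace Presentation

/-- The constraint system of a word problem. -/
def constraints (P : Presentation) : List (Constraint BaseVar) :=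
  pointConstraints ++ diffConstraints P.lhs P.rhs ++
    ((List.range P.numGens).flatMap genConstraints ++ P.rels.map relConstraint)

/-- The conditional independence implication attached to a word problem. -/
def toCIInstance (P : Presentation) : CIInstance :=
  gadgetInstance (3 * P.numGens + 4) diff.index (P.constraints.map (Constraint.map index))

variable {P : Presentation}

theorem forall_mem_constraints {p : Constraint BaseVar → Prop} :
    (∀ c ∈ P.constraints, p c) ↔ (∀ c ∈ pointConstraints, p c) ∧
      (∀ c ∈ diffConstraints P.lhs P.rhs, p c) ∧ (∀ g < P.numGens, ∀ c ∈ genConstraints g, p c) ∧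
      ∀ t ∈ P.rels, p (relConstraint t) := by
  simp only [constraints, List.forall_mem_append, List.forall_mem_flatMap, List.forall_mem_map,
    List.mem_range, and_assoc]

theorem WellFormed.constraints (hP : P.WellFormed) :
    ∀ c ∈ P.constraints, (c.map index).WellFormed (3 * P.numGens + 4) := by
  have hlhs := hP.lhs_lt
  have hrhs := hP.rhs_lt
  refine forall_mem_constraints.2 ⟨?_, ?_, fun g hg => ?_, fun t ht => ?_⟩
  · simp only [pointConstraints, List.forall_mem_cons, List.not_mem_nil, false_imp_iff,
      implies_true, and_true, Constraint.map, Constraint.WellFormed, List.map, index]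
    lia
  · simp only [diffConstraints, List.forall_mem_cons, List.not_mem_nil, false_imp_iff,
      implies_true, and_true, Constraint.map, Constraint.WellFormed, List.map, index]
    lia
  · simp only [genConstraints, mapConstraints, relConstraint, List.forall_mem_append,
      List.forall_mem_cons, List.not_mem_nil, false_imp_iff, implies_true, and_true,
      Constraint.map, Constraint.WellFormed, List.map, index]
    and_intros <;> lia
  · have := hP.rels_lt t ht
    simp only [relConstraint, List.forall_mem_cons, List.not_mem_nil, false_imp_iff,
      implies_true, and_true, Constraint.map, Constraint.WellFormed, List.map, index]
    lia

theorem WellFormed.ciValid (hP : P.WellFormed) : CIValid P.toCIInstance :=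
  ciValid_gadgetInstance (by simp only [index]; lia) (List.forall_mem_map.2 hP.constraints)

end Presentation

end ConstraintSystem

section Soundness

open BaseVar Constraint

theorem exists_map_of_graph {S : Type} {a b m : Setoid S}
    (hm : ∀ ω ω', a ω ω' → b ω ω' → m ω ω') (hb : ∀ ω ω', a ω ω' → m ω ω' → b ω ω')
    (hindep : ∀ ω ω', ∃ ω'', m ω'' ω ∧ a ω'' ω') (ω₀ : S) :
    ∃ F : Quotient a → Quotient b, ∀ ω, F ⟦ω⟧ = ⟦ω⟧ ↔ m ω ω₀ := by
  choose pick hpick_m hpick_a using fun x : Quotient a => hindep ω₀ x.out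
  have hpick : ∀ ω, a (pick ⟦ω⟧) ω := fun ω => a.trans' (hpick_a _) (Quotient.mk_out ω)
  refine ⟨fun x => ⟦pick x⟧, fun ω => ⟨fun h => ?_, fun h => Quotient.sound ?_⟩⟩
  · exact m.trans' (m.symm' (hm _ _ (hpick ω) (Quotient.exact h))) (hpick_m _)
  · exact hb _ _ (hpick ω) (m.trans' (hpick_m _) (m.symm' h))

theorem injective_of_graph {S : Type} {a b m : Setoid S} {ω₀ : S} {F : Quotient a → Quotient b}
    (hF : ∀ ω, F ⟦ω⟧ = ⟦ω⟧ ↔ m ω ω₀) (hab : ∀ (x : Quotient a) (y : Quotient b), ∃ ω : S,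
      (⟦ω⟧ : Quotient a) = x ∧ (⟦ω⟧ : Quotient b) = y)
    (hdet : ∀ ω ω', m ω ω' → b ω ω' → a ω ω') : Function.Injective F := by
  intro x x' hxx'
  obtain ⟨ω, rfl, hω⟩ := hab x (F x)
  obtain ⟨ω', rfl, hω'⟩ := hab x' (F x')
  refine Quotient.sound (hdet _ _ ?_ (Quotient.exact (hω.trans (hxx'.trans hω'.symm))))
  exact m.trans' ((hF ω).1 hω.symm) (m.symm' ((hF ω').1 hω'.symm))

/-- Three families of maps between three sets, multiplicative along the relations, become a single
action once the sets are identified by means of the maps attached to `one`. -/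
theorem isModel_of_maps {G Q₁ Q₂ Q₃ : Type} {one : G} {Rel : G → G → G → Prop}
    {F₁₂ : G → Q₁ → Q₂} {F₁₃ : G → Q₁ → Q₃} {F₂₃ : G → Q₂ → Q₃} (e : Q₁ ≃ Q₂)
    (he : ⇑e = F₁₂ one) (hinj : Function.Injective (F₂₃ one))
    (hrel : ∀ k g h, Rel k g h → F₁₃ k = F₂₃ g ∘ F₁₂ h ∧ F₁₃ k = F₂₃ one ∘ F₁₂ k ∧
      F₁₃ g = F₂₃ g ∘ F₁₂ one ∧ F₁₃ g = F₂₃ one ∘ F₁₂ g) :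
    IsModel (M := Function.End Q₁) one Rel fun g => e.symm ∘ F₁₂ g := by
  refine ⟨(congrArg (e.symm ∘ ·) he.symm).trans e.symm_comp_self, fun k g h hkgh => ?_⟩
  obtain ⟨hkgh, hk, hg, hg'⟩ := hrel k g h hkgh
  have hcomp : F₁₂ k = F₁₂ g ∘ e.symm ∘ F₁₂ h := hinj.comp_left <| calc
    F₂₃ one ∘ F₁₂ k = F₂₃ g ∘ F₁₂ h := hk.symm.trans hkgh
    _ = (F₂₃ g ∘ ⇑e) ∘ e.symm ∘ F₁₂ h := by
      ext x
      simp
    _ = F₂₃ one ∘ F₁₂ g ∘ e.symm ∘ F₁₂ h := by rw [he, ← hg, hg', Function.comp_assoc]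
  change e.symm ∘ F₁₂ k = (e.symm ∘ F₁₂ g) ∘ e.symm ∘ F₁₂ h
  rw [hcomp, Function.comp_assoc]

variable {S : Type} {E : BaseVar → Setoid S}

theorem exists_point (hE : ∀ c ∈ pointConstraints, c.Holds E) (x₁ : Quotient (E pt₁))
    (x₂ : Quotient (E pt₂)) (x₃ : Quotient (E pt₃)) :
    ∃ ω : S, (⟦ω⟧ : Quotient (E pt₁)) = x₁ ∧ (⟦ω⟧ : Quotient (E pt₂)) = x₂ ∧
      (⟦ω⟧ : Quotient (E pt₃)) = x₃ := by
  induction x₁, x₂ using Quotient.inductionOn₂ with | _ ω₁ ω₂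
  induction x₃ using Quotient.inductionOn with | _ ω₃
  simp only [pointConstraints, List.forall_mem_cons, Holds, List.not_mem_nil, false_imp_iff,
    implies_true, and_true] at hE
  obtain ⟨h₁, h₂, -⟩ := hE
  obtain ⟨ξ, hξ₂, hξ₃⟩ := h₂ ω₂ ω₃
  obtain ⟨η, hη₁, hη₂, hη₃⟩ := h₁ ω₁ ξ
  exact ⟨η, Quotient.sound hη₁, Quotient.sound ((E pt₂).trans' hη₂ hξ₂),
    Quotient.sound ((E pt₃).trans' hη₃ hξ₃)⟩

theorem exists_maps_of_genConstraints {g : ℕ} (hE : ∀ c ∈ genConstraints g, c.Holds E) (ω₀ : S) :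
    (∃ F : Quotient (E pt₁) → Quotient (E pt₂), ∀ ω, F ⟦ω⟧ = ⟦ω⟧ ↔ E (map₁₂ g) ω ω₀) ∧
      (∃ F : Quotient (E pt₁) → Quotient (E pt₃), ∀ ω, F ⟦ω⟧ = ⟦ω⟧ ↔ E (map₁₃ g) ω ω₀) ∧
      ∃ F : Quotient (E pt₂) → Quotient (E pt₃), ∀ ω, F ⟦ω⟧ = ⟦ω⟧ ↔ E (map₂₃ g) ω ω₀ := by
  simp only [genConstraints, List.forall_mem_append] at hE
  obtain ⟨⟨⟨h₁₂, h₁₃⟩, h₂₃⟩, -⟩ := hE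
  have hmap : ∀ a b m : BaseVar, (∀ c ∈ mapConstraints a b m, c.Holds E) →
      ∃ F : Quotient (E a) → Quotient (E b), ∀ ω, F ⟦ω⟧ = ⟦ω⟧ ↔ E m ω ω₀ := by
    intro a b m h
    simp only [mapConstraints, List.forall_mem_cons, Holds,
      List.not_mem_nil, false_imp_iff, implies_true, and_true, and_imp] at h
    exact exists_map_of_graph h.1 h.2.1 h.2.2 ω₀
  exact ⟨hmap _ _ _ h₁₂, hmap _ _ _ h₁₃, hmap _ _ _ h₂₃⟩

theorem comp_eq_of_relConstraint (hpt : ∀ c ∈ pointConstraints, c.Holds E) {ω₀ : S} {k g h : ℕ}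
    (hrel : (relConstraint (k, g, h)).Holds E) {F₁₂ : Quotient (E pt₁) → Quotient (E pt₂)}
    {F₁₃ : Quotient (E pt₁) → Quotient (E pt₃)} {F₂₃ : Quotient (E pt₂) → Quotient (E pt₃)}
    (h₁₂ : ∀ ω, F₁₂ ⟦ω⟧ = ⟦ω⟧ ↔ E (map₁₂ h) ω ω₀) (h₁₃ : ∀ ω, F₁₃ ⟦ω⟧ = ⟦ω⟧ ↔ E (map₁₃ k) ω ω₀)
    (h₂₃ : ∀ ω, F₂₃ ⟦ω⟧ = ⟦ω⟧ ↔ E (map₂₃ g) ω ω₀) : F₁₃ = F₂₃ ∘ F₁₂ := by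
  funext x
  obtain ⟨ω, rfl, hω₂, hω₃⟩ := exists_point hpt x (F₁₂ x) (F₂₃ (F₁₂ x))
  have hmap₁₂ : E (map₁₂ h) ω ω₀ := (h₁₂ ω).1 hω₂.symm
  have hmap₂₃ : E (map₂₃ g) ω ω₀ := (h₂₃ ω).1 (by rw [hω₂, hω₃])
  exact ((h₁₃ ω).2 (hrel ω ω₀ (by simp [hmap₁₂, hmap₂₃]))).trans hω₃

theorem bijective_map_zero (hpt : ∀ c ∈ pointConstraints, c.Holds E) {ω₀ : S}
    {F : Quotient (E pt₁) → Quotient (E pt₂)} (hF : ∀ ω, F ⟦ω⟧ = ⟦ω⟧ ↔ E (map₁₂ 0) ω ω₀) :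
    Function.Bijective F := by
  have hpoint := exists_point hpt
  simp only [pointConstraints, List.forall_mem_cons, Holds,
    List.not_mem_nil, false_imp_iff, implies_true, and_true, and_imp] at hpt
  obtain ⟨-, -, -, hsurj, hinj⟩ := hpt
  refine ⟨injective_of_graph hF (fun x y => ?_) hinj, fun y => ?_⟩
  · obtain ⟨ω, hx, hy, -⟩ := hpoint x y ⟦ω₀⟧
    exact ⟨ω, hx, hy⟩
  · induction y using Quotient.inductionOn with | _ ω
    obtain ⟨η, hη, hηω⟩ := hsurj ω₀ ω
    exact ⟨⟦η⟧, ((hF η).2 hη).trans (Quotient.sound hηω)⟩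

theorem injective_map_zero (hpt : ∀ c ∈ pointConstraints, c.Holds E) {ω₀ : S}
    {F : Quotient (E pt₂) → Quotient (E pt₃)} (hF : ∀ ω, F ⟦ω⟧ = ⟦ω⟧ ↔ E (map₂₃ 0) ω ω₀) :
    Function.Injective F := by
  have hpoint := exists_point hpt
  simp only [pointConstraints, List.forall_mem_cons, Holds,
    List.not_mem_nil, false_imp_iff, implies_true, and_true, and_imp] at hpt
  refine injective_of_graph hF (fun x y => ?_) hpt.2.2.1
  obtain ⟨ω, -, hx, hy⟩ := hpoint ⟦ω₀⟧ x y
  exact ⟨ω, hx, hy⟩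

theorem Presentation.WellFormed.map_lhs_of_map_rhs {P : Presentation} (hP : P.WellFormed)
    (hE : ∀ c ∈ P.constraints, c.Holds E)
    (hword : ∀ (M : Type) [Monoid M] (γ : ℕ → M), IsModel 0 P.Rel γ → γ P.lhs = γ P.rhs)
    {ω ω₀ : S} (hω : E (map₁₂ P.rhs) ω ω₀) : E (map₁₂ P.lhs) ω ω₀ := by
  obtain ⟨hpt, -, hgen, hrel⟩ := Presentation.forall_mem_constraints.1 hE
  have hzero : 0 < P.numGens := Nat.zero_lt_of_lt hP.lhs_lt
  have : Nonempty (Quotient (E pt₂)) := ⟨⟦ω₀⟧⟩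
  have : Nonempty (Quotient (E pt₃)) := ⟨⟦ω₀⟧⟩
  choose! F₁₂ h₁₂ using fun g hg => (exists_maps_of_genConstraints (hgen g hg) ω₀).1
  choose! F₁₃ h₁₃ using fun g hg => (exists_maps_of_genConstraints (hgen g hg) ω₀).2.1
  choose! F₂₃ h₂₃ using fun g hg => (exists_maps_of_genConstraints (hgen g hg) ω₀).2.2
  have hmul : ∀ k < P.numGens, ∀ g < P.numGens, ∀ h < P.numGens,
      (relConstraint (k, g, h)).Holds E → F₁₃ k = F₂₃ g ∘ F₁₂ h := fun k hk g hg h hh hkgh =>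
    comp_eq_of_relConstraint hpt hkgh (h₁₂ h hh) (h₁₃ k hk) (h₂₃ g hg)
  have hmul_zero : ∀ g < P.numGens, F₁₃ g = F₂₃ g ∘ F₁₂ 0 := fun g hg =>
    hmul g hg g hg 0 hzero (hgen g hg _ (by simp [genConstraints]))
  have hzero_mul : ∀ g < P.numGens, F₁₃ g = F₂₃ 0 ∘ F₁₂ g := fun g hg =>
    hmul g hg 0 hzero g hg (hgen g hg _ (by simp [genConstraints]))
  let e := Equiv.ofBijective (F₁₂ 0) (bijective_map_zero hpt (h₁₂ 0 hzero))
  have hmodel : IsModel (M := Function.End (Quotient (E pt₁))) 0 P.Rel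
      fun g => e.symm ∘ F₁₂ g := by
    refine isModel_of_maps (F₁₃ := F₁₃) (F₂₃ := F₂₃) e rfl
      (injective_map_zero hpt (h₂₃ 0 hzero)) fun k g h hkgh => ?_
    obtain ⟨hk, hg, hh⟩ := hP.rels_lt _ hkgh
    exact ⟨hmul k hk g hg h hh (hrel _ hkgh), hzero_mul k hk, hmul_zero g hg, hzero_mul g hg⟩
  have hF : F₁₂ P.lhs = F₁₂ P.rhs := e.symm.injective.comp_left (hword _ _ hmodel)
  rwa [← h₁₂ _ hP.lhs_lt, hF, h₁₂ _ hP.rhs_lt]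

theorem Presentation.WellFormed.diff_const {P : Presentation} (hP : P.WellFormed)
    (hE : ∀ c ∈ P.constraints, c.Holds E)
    (hword : ∀ (M : Type) [Monoid M] (γ : ℕ → M), IsModel 0 P.Rel γ → γ P.lhs = γ P.rhs)
    (ω ω' : S) : E diff ω ω' := by
  obtain ⟨-, hdiff, hgen, -⟩ := Presentation.forall_mem_constraints.1 hE
  have hindep : (indep (map₁₂ P.rhs) [pt₁]).Holds E :=
    hgen P.rhs hP.rhs_lt _ (by simp [genConstraints, mapConstraints])
  simp only [diffConstraints, List.forall_mem_cons, Holds,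
    List.not_mem_nil, false_imp_iff, implies_true, and_true, and_imp] at hdiff
  obtain ⟨η, hη, hηω⟩ := hindep ω' ω
  have hηω' : E diff η ω' := hdiff.2 η ω' (hP.map_lhs_of_map_rhs hE hword hη) hη
  exact (E diff).trans' ((E diff).symm' (hdiff.1 η ω (hηω pt₁ List.mem_cons_self))) hηω'

theorem Presentation.WellFormed.ciHolds {P : Presentation} (hP : P.WellFormed)
    (hword : ∀ (M : Type) [Monoid M] (γ : ℕ → M), IsModel 0 P.Rel γ → γ P.lhs = γ P.rhs) :
    CIHolds P.toCIInstance := by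
  refine ciHolds_gadgetInstance (by simp only [index]; lia) (List.forall_mem_map.2 hP.constraints)
    fun S E hE => hP.diff_const (E := fun v => E v.index) ?_ hword
  simpa only [List.forall_mem_map, holds_map] using hE

end Soundness

section Completeness

open BaseVar

section Kernel

variable {ι G A : Type} [AddCommGroup G] [AddCommGroup A] (K : ι → G →+ A)

theorem holds_ker_determined {z : ι} {l : List ι} :
    (Constraint.determined z l).Holds (fun i => Setoid.ker (K i)) ↔
      ∀ g, (∀ i ∈ l, K i g = 0) → K z g = 0 := by
  simp only [Constraint.Holds, Setoid.ker_def]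
  refine ⟨fun h g hg => ?_, fun h g g' hgg' => ?_⟩
  · simpa using h g 0 (by simpa using hg)
  · simpa [sub_eq_zero] using h (g - g') (by simpa [sub_eq_zero] using hgg')

theorem holds_ker_indep {z : ι} {l : List ι} :
    (Constraint.indep z l).Holds (fun i => Setoid.ker (K i)) ↔
      ∀ g, ∃ k, K z k = K z g ∧ ∀ i ∈ l, K i k = 0 := by
  simp only [Constraint.Holds, Setoid.ker_def]
  refine ⟨fun h g => by simpa using h g 0, fun h g g' => ?_⟩
  obtain ⟨k, hkz, hkl⟩ := h (g - g')
  exact ⟨k + g', by simp [hkz], fun i hi => by simp [hkl i hi]⟩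

end Kernel

variable {M : Type} [Monoid M]

/-- The action of `c` on functions on the monoid by right translation of the argument. -/
def rightTranslate (c : M) : (M → ZMod 2) →+ (M → ZMod 2) where
  toFun x m := x (m * c)
  map_zero' := rfl
  map_add' _ _ := rfl

theorem rightTranslate_one (x : M → ZMod 2) : rightTranslate 1 x = x := by
  ext m
  simp [rightTranslate]

theorem rightTranslate_mul (c d : M) (x : M → ZMod 2) :
    rightTranslate (c * d) x = rightTranslate c (rightTranslate d x) := by
  ext m
  simp [rightTranslate, mul_assoc]

theorem rightTranslate_injective : Function.Injective (rightTranslate (M := M)) := by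
  intro c d h
  by_contra hcd
  have := congrFun (DFunLike.congr_fun h (Pi.single c 1)) 1
  simp [rightTranslate, Ne.symm hcd] at this

/-- Realizations of the variables by homomorphisms on triples of functions on `M`: the point
variables are the coordinates, and a value of `map₁₂ g` fixes the difference between the second
coordinate and the image of the first one under `φ g`. -/
def modelHom (φ : ℕ → M) (u s : ℕ) :
    BaseVar → (M → ZMod 2) × (M → ZMod 2) × (M → ZMod 2) →+ (M → ZMod 2) :=
  let x₁ := AddMonoidHom.fst _ _
  let x₂ := (AddMonoidHom.fst _ _).comp (AddMonoidHom.snd _ _)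
  let x₃ := (AddMonoidHom.snd _ _).comp (AddMonoidHom.snd _ _)
  fun
  | pt₁ => x₁
  | pt₂ => x₂
  | pt₃ => x₃
  | diff => (rightTranslate (φ u)).comp x₁ - (rightTranslate (φ s)).comp x₁
  | map₁₂ g => x₂ - (rightTranslate (φ g)).comp x₁
  | map₁₃ g => x₃ - (rightTranslate (φ g)).comp x₁
  | map₂₃ g => x₃ - (rightTranslate (φ g)).comp x₂

variable {φ : ℕ → M} (u s : ℕ)

theorem relConstraint_holds_modelHom {k g h : ℕ} (hkgh : φ k = φ g * φ h) :
    (relConstraint (k, g, h)).Holds fun v => Setoid.ker (modelHom φ u s v) := by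
  simp only [relConstraint, holds_ker_determined]
  rintro ⟨x, y, z⟩ hxyz
  simp only [List.forall_mem_cons, List.not_mem_nil, false_imp_iff, implies_true, and_true,
    modelHom, AddMonoidHom.sub_apply, AddMonoidHom.comp_apply, AddMonoidHom.coe_fst,
    AddMonoidHom.coe_snd, sub_eq_zero] at hxyz
  simp [modelHom, hxyz, hkgh, rightTranslate_mul]

theorem genConstraints_hold_modelHom (hzero : φ 0 = 1) (g : ℕ) :
    ∀ c ∈ genConstraints g, c.Holds fun v => Setoid.ker (modelHom φ u s v) := by
  simp only [genConstraints, mapConstraints, List.forall_mem_append, List.forall_mem_cons,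
    List.not_mem_nil, false_imp_iff, implies_true, and_true, holds_ker_determined, holds_ker_indep]
  refine ⟨⟨⟨⟨?_, ?_, fun p => ⟨(0, p.2.1 - rightTranslate (φ g) p.1, 0), ?_⟩⟩,
      ?_, ?_, fun p => ⟨(0, 0, p.2.2 - rightTranslate (φ g) p.1), ?_⟩⟩,
      ?_, ?_, fun p => ⟨(0, 0, p.2.2 - rightTranslate (φ g) p.2.1), ?_⟩⟩,
    relConstraint_holds_modelHom u s (by simp [hzero]),
    relConstraint_holds_modelHom u s (by simp [hzero])⟩ <;> simp +contextual [modelHom]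

theorem pointConstraints_hold_modelHom (hzero : φ 0 = 1) :
    ∀ c ∈ pointConstraints, c.Holds fun v => Setoid.ker (modelHom φ u s v) := by
  simp only [pointConstraints, List.forall_mem_cons, List.not_mem_nil, false_imp_iff, implies_true,
    and_true, holds_ker_determined, holds_ker_indep]
  refine ⟨?_, ?_, ?_, ?_, ?_⟩
  · rintro ⟨x, y, z⟩
    exact ⟨(x, 0, 0), by simp [modelHom]⟩
  · rintro ⟨x, y, z⟩
    exact ⟨(0, y, 0), by simp [modelHom]⟩
  · rintro ⟨x, y, z⟩
    simp +contextual [modelHom, hzero, rightTranslate_one, sub_eq_zero]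
  · rintro ⟨x, y, z⟩
    exact ⟨(x - y, 0, 0), by simp [modelHom, hzero, rightTranslate_one]⟩
  · rintro ⟨x, y, z⟩
    simp +contextual [modelHom, hzero, rightTranslate_one, sub_eq_zero]

theorem diffConstraints_hold_modelHom :
    ∀ c ∈ diffConstraints u s, c.Holds fun v => Setoid.ker (modelHom φ u s v) := by
  simp only [diffConstraints, List.forall_mem_cons, List.not_mem_nil, false_imp_iff, implies_true,
    and_true, holds_ker_determined]
  constructor
  · rintro ⟨x, y, z⟩
    simp +contextual [modelHom]
  · rintro ⟨x, y, z⟩ h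
    simp only [modelHom, AddMonoidHom.sub_apply, AddMonoidHom.comp_apply, AddMonoidHom.coe_fst,
      AddMonoidHom.coe_snd, sub_eq_zero] at h ⊢
    exact h.1.symm.trans h.2

theorem Presentation.not_ciHolds {P : Presentation} [Finite M] (hφ : IsModel 0 P.Rel φ)
    (hne : φ P.lhs ≠ φ P.rhs) : ¬ CIHolds P.toCIInstance := by
  let K := modelHom φ P.lhs P.rhs
  have hindex : ∀ v : BaseVar, equivNat.symm v.index = v := equivNat.symm_apply_apply
  refine not_ciHolds_gadgetInstance (fun n => K (equivNat.symm n)) ?_ (i := pt₁.index)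
    (by simp only [index]; lia) (by simp [index]) ?_ ?_
  · simp only [List.forall_mem_map, Constraint.holds_map, hindex]
    exact forall_mem_constraints.2 ⟨pointConstraints_hold_modelHom _ _ hφ.1,
      diffConstraints_hold_modelHom _ _, fun g _ => genConstraints_hold_modelHom _ _ hφ.1 g,
      fun t ht => relConstraint_holds_modelHom _ _ (hφ.2 _ _ _ ht)⟩
  · rw [hindex, hindex]
    rintro ⟨x, y, z⟩
    simp +contextual [K, modelHom]
  · rw [hindex]
    refine fun hdiff => hne (rightTranslate_injective (AddMonoidHom.ext fun x => ?_))
    exact sub_eq_zero.1 (DFunLike.congr_fun hdiff (x, 0, 0))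

end Completeness

/-! ### Word problems -/

/-- The word `w` equals the generator `z` in all monoids in which the relations hold. -/
def Entails {G : Type} (one : G) (Rel : G → G → G → Prop) (w : List G) (z : G) : Prop :=
  ∀ (M : Type) [Monoid M] (γ : G → M), IsModel one Rel γ → (w.map γ).prod = γ z

/-- The word `w` differs from the generator `z` in some finite monoid in which the relations
hold. -/
def FinitelyRefuted {G : Type} (one : G) (Rel : G → G → G → Prop) (w : List G) (z : G) : Prop :=
  ∃ (M : Type) (_ : Monoid M) (γ : G → M), Finite M ∧ IsModel one Rel γ ∧ (w.map γ).prod ≠ γ z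

/-- The relations `R` on the generators less than `m`, together with new generators
`m, …, m + v.length` for the prefixes of the word `v`; the question is whether `v` equals `z`. -/
def wordPresentation (m : ℕ) (R : List (ℕ × ℕ × ℕ)) (z : ℕ) (v : List ℕ) : Presentation where
  numGens := m + v.length + 1
  rels := R ++ (m, 0, 0) :: (List.range v.length).map fun i => (m + i + 1, m + i, v.getD i 0)
  lhs := m + v.length
  rhs := z

section WordPresentation

variable {M : Type} [Monoid M] {m z : ℕ} {R : List (ℕ × ℕ × ℕ)} {v : List ℕ} {φ : ℕ → M}

theorem forall_rel_wordPresentation {p : ℕ → ℕ → ℕ → Prop} :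
    (∀ k g h, (wordPresentation m R z v).Rel k g h → p k g h) ↔
      (∀ k g h, (k, g, h) ∈ R → p k g h) ∧ p m 0 0 ∧
        ∀ i (hi : i < v.length), p (m + i + 1) (m + i) v[i] := by
  simp only [Presentation.Rel, wordPresentation, List.mem_append, List.mem_cons, List.mem_map,
    List.mem_range, Prod.mk.injEq]
  constructor
  · exact fun h => ⟨fun k g h' hmem => h k g h' (.inl hmem), h m 0 0 (.inr (.inl ⟨rfl, rfl, rfl⟩)),
      fun i hi => h _ _ _ (.inr (.inr ⟨i, hi, rfl, rfl, List.getD_eq_getElem v 0 hi⟩))⟩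
  · rintro ⟨hR, hempty, hsnoc⟩ k g h (hmem | ⟨rfl, rfl, rfl⟩ | ⟨i, hi, rfl, rfl, rfl⟩)
    · exact hR k g h hmem
    · exact hempty
    · rw [List.getD_eq_getElem v 0 hi]
      exact hsnoc i hi

theorem wellFormed_wordPresentation (hz : z < m) (hv : ∀ g ∈ v, g < m)
    (hR : ∀ t ∈ R, t.1 < m ∧ t.2.1 < m ∧ t.2.2 < m) : (wordPresentation m R z v).WellFormed where
  lhs_lt := Nat.lt_succ_self _
  rhs_lt := by simp only [wordPresentation]; lia
  rels_lt := by
    rintro ⟨k, g, h⟩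
    refine (forall_rel_wordPresentation (p := fun k g h => k < _ ∧ g < _ ∧ h < _)).2
      ⟨fun k g h hkgh => ?_, ?_, fun i hi => ?_⟩ k g h
    · have := hR _ hkgh
      simp only [wordPresentation]
      lia
    · simp only [wordPresentation]
      lia
    · have := hv _ (List.getElem_mem hi)
      simp only [wordPresentation]
      lia

theorem IsModel.prod_of_wordPresentation (hφ : IsModel 0 (wordPresentation m R z v).Rel φ) :
    φ (m + v.length) = (v.map φ).prod := by
  obtain ⟨-, hempty, hsnoc⟩ := forall_rel_wordPresentation.1 hφ.2
  have hprefix : ∀ i ≤ v.length, φ (m + i) = ((v.map φ).take i).prod := by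
    intro i hi
    induction i with
    | zero => simpa [hφ.1] using hempty
    | succ i ih =>
      rw [← Nat.add_assoc, hsnoc i hi, ih (Nat.le_of_succ_le hi),
        List.prod_take_succ _ _ (by simpa using hi), List.getElem_map]
  rw [hprefix v.length le_rfl, List.take_of_length_le (List.length_map _).le]

/-- The extension of `φ` from the generators less than `m` to the generators for the prefixes of
the word `v`. -/
def extendToPrefixes (m : ℕ) (v : List ℕ) (φ : ℕ → M) (n : ℕ) : M :=
  if n < m then φ n else ((v.map φ).take (n - m)).prod

theorem extendToPrefixes_of_lt {n : ℕ} (hn : n < m) : extendToPrefixes m v φ n = φ n :=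
  if_pos hn

theorem extendToPrefixes_add (i : ℕ) :
    extendToPrefixes m v φ (m + i) = ((v.map φ).take i).prod := by
  simp [extendToPrefixes]

theorem IsModel.extendToPrefixes (hφ : IsModel 0 (fun k g h => (k, g, h) ∈ R) φ) (hm : 0 < m)
    (hv : ∀ g ∈ v, g < m) (hR : ∀ t ∈ R, t.1 < m ∧ t.2.1 < m ∧ t.2.2 < m) :
    IsModel 0 (wordPresentation m R z v).Rel (extendToPrefixes m v φ) := by
  refine ⟨(extendToPrefixes_of_lt hm).trans hφ.1,
    forall_rel_wordPresentation.2 ⟨fun k g h hkgh => ?_, ?_, fun i hi => ?_⟩⟩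
  · obtain ⟨hk, hg, hh⟩ := hR _ hkgh
    rw [extendToPrefixes_of_lt hk, extendToPrefixes_of_lt hg, extendToPrefixes_of_lt hh]
    exact hφ.2 k g h hkgh
  · have hempty := extendToPrefixes_add (m := m) (v := v) (φ := φ) 0
    simpa [extendToPrefixes_of_lt hm, hφ.1] using hempty
  · rw [Nat.add_assoc, extendToPrefixes_add, extendToPrefixes_add,
      extendToPrefixes_of_lt (hv _ (List.getElem_mem hi)),
      List.prod_take_succ _ _ (by simpa using hi), List.getElem_map]

end WordPresentation

section Numbering

variable {G : Type} [Finite G]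

theorem exists_numbering (one : G) :
    ∃ (code : G → ℕ) (m : ℕ), Function.Injective code ∧ code one = 0 ∧ ∀ g, code g < m := by
  obtain ⟨f, hf⟩ := exists_injective_nat G
  let code := Equiv.swap (f one) 0 ∘ f
  obtain ⟨m, hm⟩ := (Set.finite_range code).bddAbove
  exact ⟨code, m + 1, (Equiv.injective _).comp hf, Equiv.swap_apply_left _ _,
    fun g => Nat.lt_succ_of_le (hm ⟨g, rfl⟩)⟩

/-- The list of the relations, in terms of a numbering of the generators. -/
def codedRels (code : G → ℕ) (Rel : G → G → G → Prop) : List (ℕ × ℕ × ℕ) :=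
  (Set.toFinite {t : G × G × G | Rel t.1 t.2.1 t.2.2}).toFinset.toList.map
    fun t => (code t.1, code t.2.1, code t.2.2)

theorem mem_codedRels {code : G → ℕ} {Rel : G → G → G → Prop} {t : ℕ × ℕ × ℕ} :
    t ∈ codedRels code Rel ↔ ∃ k g h, Rel k g h ∧ (code k, code g, code h) = t := by
  simp [codedRels]

variable {one z : G} {Rel : G → G → G → Prop} {code : G → ℕ} {m : ℕ} {w : List G}

theorem codedRels_lt (hm : ∀ g, code g < m) :
    ∀ t ∈ codedRels code Rel, t.1 < m ∧ t.2.1 < m ∧ t.2.2 < m := by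
  simp only [mem_codedRels]
  rintro - ⟨k, g, h, -, rfl⟩
  exact ⟨hm k, hm g, hm h⟩

theorem wellFormed_wordPresentation_codedRels (hm : ∀ g, code g < m) :
    (wordPresentation m (codedRels code Rel) (code z) (w.map code)).WellFormed :=
  wellFormed_wordPresentation (hm z) (List.forall_mem_map.2 fun g _ => hm g) (codedRels_lt hm)

theorem Entails.ciHolds (hw : Entails one Rel w z) (hm : ∀ g, code g < m) (hone : code one = 0) :
    CIHolds (wordPresentation m (codedRels code Rel) (code z) (w.map code)).toCIInstance := by
  refine (wellFormed_wordPresentation_codedRels hm).ciHolds fun M _ φ hφ => ?_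
  have hrel := (forall_rel_wordPresentation.1 hφ.2).1
  have hγ : IsModel one Rel (φ ∘ code) := ⟨(congrArg φ hone).trans hφ.1, fun k g h hkgh =>
    hrel _ _ _ (mem_codedRels.2 ⟨k, g, h, hkgh, rfl⟩)⟩
  exact hφ.prod_of_wordPresentation.trans (by rw [List.map_map]; exact hw M _ hγ)

theorem FinitelyRefuted.not_ciHolds (hw : FinitelyRefuted one Rel w z)
    (hm : ∀ g, code g < m) (hone : code one = 0) (hcode : Function.Injective code) :
    ¬ CIHolds (wordPresentation m (codedRels code Rel) (code z) (w.map code)).toCIInstance := by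
  obtain ⟨M, _, γ, _, hγ, hne⟩ := hw
  obtain ⟨φ, rfl⟩ : ∃ φ : ℕ → M, φ ∘ code = γ :=
    ⟨Function.extend code γ 1, funext (hcode.extend_apply _ _)⟩
  have hmodel : IsModel 0 (fun k g h => (k, g, h) ∈ codedRels code Rel) φ := by
    refine ⟨by rw [← hone]; exact hγ.1, fun k' g' h' hmem => ?_⟩
    obtain ⟨k, g, h, hkgh, ht⟩ := mem_codedRels.1 hmem
    obtain ⟨rfl, rfl, rfl⟩ := by simpa only [Prod.mk.injEq] using ht
    exact hγ.2 k g h hkgh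
  refine Presentation.not_ciHolds (hmodel.extendToPrefixes (Nat.zero_lt_of_lt (hm one))
    (List.forall_mem_map.2 fun g _ => hm g) (codedRels_lt hm)) ?_
  simp only [wordPresentation, extendToPrefixes_add, extendToPrefixes_of_lt (hm z)]
  rwa [List.take_of_length_le (List.length_map _).le, List.map_map]

end Numbering

/-! ### The reduction is primitive recursive -/

section Primrec

open Primrec BaseVar

variable {α β : Type} [Primcodable α] [Primcodable β]

theorem primrec_list_singleton {f : α → β} (hf : Primrec f) : Primrec fun a => [f a] :=
  list_cons.comp hf (const [])

theorem primrec_list_pair {f g : α → β} (hf : Primrec f) (hg : Primrec g) :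
    Primrec fun a => [f a, g a] :=
  list_cons.comp hf (primrec_list_singleton hg)

theorem primrec_copyA : Primrec copyA := succ.comp (nat_mul.comp (const 2) .id)

theorem primrec_copyB : Primrec copyB := succ.comp primrec_copyA

theorem primrec_otherCopies {N i : α → ℕ} (hN : Primrec N) (hi : Primrec i) :
    Primrec fun a => otherCopies (N a) (i a) := by
  have hcopies : Primrec fun p : α × ℕ => if p.2 = i p.1 then [] else [copyA p.2, copyB p.2] :=
    (Primrec.ite (Primrec.eq.comp snd (hi.comp fst)) (const [])
      (primrec_list_pair (primrec_copyA.comp snd) (primrec_copyB.comp snd))).of_eq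
        fun p => by congr
  exact list_flatMap (list_range.comp hN) hcopies.to₂

theorem primrec_copyStatements {N i : α → ℕ} (hN : Primrec N) (hi : Primrec i) :
    Primrec fun a => copyStatements (N a) (i a) := by
  have hA := primrec_list_singleton (primrec_copyA.comp hi)
  have hB := primrec_list_singleton (primrec_copyB.comp hi)
  have hother := primrec_otherCopies hN hi
  exact primrec_list_pair (hA.pair (hother.pair hB)) (hB.pair (hother.pair hA))

theorem primrec_gadgetInstance {N d : α → ℕ} {C : α → List (Constraint ℕ)} (hN : Primrec N)
    (hd : Primrec d) (hC : Primrec fun a => (C a).map Constraint.toCI) :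
    Primrec fun a => gadgetInstance (N a) (d a) (C a) := by
  refine (nat_mul.comp (const 2) hN).pair (Primrec.pair ?_ (list_append.comp ?_ hC))
  · exact (primrec_list_singleton (primrec_copyA.comp hd)).pair
      ((primrec_otherCopies hN hd).pair (const []))
  · exact list_flatMap (list_range.comp hN) (primrec_copyStatements (hN.comp fst) snd).to₂

/-- The conditional independence statement of a constraint on the variables of a presentation. -/
def Constraint.statement (c : Constraint BaseVar) : CIStatement := (c.map index).toCI

theorem primrec_index_map₁₂ {g : α → ℕ} (hg : Primrec g) : Primrec fun a => (map₁₂ (g a)).index :=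
  nat_add.comp (nat_mul.comp (const 3) hg) (const 4)

theorem primrec_index_map₁₃ {g : α → ℕ} (hg : Primrec g) : Primrec fun a => (map₁₃ (g a)).index :=
  nat_add.comp (nat_mul.comp (const 3) hg) (const 5)

theorem primrec_index_map₂₃ {g : α → ℕ} (hg : Primrec g) : Primrec fun a => (map₂₃ (g a)).index :=
  nat_add.comp (nat_mul.comp (const 3) hg) (const 6)

section Statement

variable {x y z : α → BaseVar}

theorem primrec_statement_indep (hz : Primrec fun a => (z a).index)
    (hx : Primrec fun a => (x a).index) :
    Primrec fun a => (Constraint.indep (z a) [x a]).statement :=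
  (primrec_list_singleton (primrec_copyA.comp hz)).pair
    ((primrec_list_singleton (primrec_copyA.comp hx)).pair (const []))

theorem primrec_statement_determined (hz : Primrec fun a => (z a).index)
    (hx : Primrec fun a => (x a).index) (hy : Primrec fun a => (y a).index) :
    Primrec fun a => (Constraint.determined (z a) [x a, y a]).statement :=
  (primrec_list_singleton (primrec_copyA.comp hz)).pair
    ((primrec_list_singleton (primrec_copyB.comp hz)).pair
      (primrec_list_pair (primrec_copyA.comp hx) (primrec_copyA.comp hy)))

theorem primrec_statement_mapConstraints (hz : Primrec fun a => (z a).index)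
    (hx : Primrec fun a => (x a).index) (hy : Primrec fun a => (y a).index) :
    Primrec fun a => (mapConstraints (x a) (y a) (z a)).map Constraint.statement :=
  list_cons.comp (primrec_statement_determined hz hx hy) <|
    primrec_list_pair (primrec_statement_determined hy hx hz) (primrec_statement_indep hz hx)

end Statement

theorem primrec_statement_relConstraint {t : α → ℕ × ℕ × ℕ} (ht : Primrec t) :
    Primrec fun a => (relConstraint (t a)).statement :=
  primrec_statement_determined (primrec_index_map₁₃ (fst.comp ht))
    (primrec_index_map₁₂ (snd.comp (snd.comp ht))) (primrec_index_map₂₃ (fst.comp (snd.comp ht)))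

theorem primrec_statement_genConstraints {g : α → ℕ} (hg : Primrec g) :
    Primrec fun a => (genConstraints (g a)).map Constraint.statement := by
  simp only [genConstraints, List.map_append]
  exact list_append.comp (list_append.comp (list_append.comp
      (primrec_statement_mapConstraints (primrec_index_map₁₂ hg) (const _) (const _))
      (primrec_statement_mapConstraints (primrec_index_map₁₃ hg) (const _) (const _)))
      (primrec_statement_mapConstraints (primrec_index_map₂₃ hg) (const _) (const _)))
    (primrec_list_pair (primrec_statement_relConstraint (hg.pair (hg.pair (const 0))))
      (primrec_statement_relConstraint (hg.pair ((const 0).pair hg))))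

theorem primrec_statement_diffConstraints {u s : α → ℕ} (hu : Primrec u) (hs : Primrec s) :
    Primrec fun a => (diffConstraints (u a) (s a)).map Constraint.statement :=
  list_cons.comp (const _) <| primrec_list_singleton <|
    primrec_statement_determined (const _) (primrec_index_map₁₂ hu) (primrec_index_map₁₂ hs)

theorem primrec_toCIInstance {P : α → Presentation} (hgens : Primrec fun a => (P a).numGens)
    (hrels : Primrec fun a => (P a).rels) (hlhs : Primrec fun a => (P a).lhs)
    (hrhs : Primrec fun a => (P a).rhs) : Primrec fun a => (P a).toCIInstance := by
  refine primrec_gadgetInstance (nat_add.comp (nat_mul.comp (const 3) hgens) (const 4)) (const _) ?_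
  have hstatements : ∀ a, (((P a).constraints.map (Constraint.map index)).map Constraint.toCI) =
      pointConstraints.map Constraint.statement ++
        (diffConstraints (P a).lhs (P a).rhs).map Constraint.statement ++
        ((List.range (P a).numGens).flatMap
            (fun g => (genConstraints g).map Constraint.statement) ++
          (P a).rels.map fun t => (relConstraint t).statement) := by
    intro a
    simp only [Presentation.constraints, List.map_append, List.map_flatMap, List.map_map]
    rfl
  simp only [hstatements]
  exact list_append.comp
    (list_append.comp (const _) (primrec_statement_diffConstraints hlhs hrhs))
    (list_append.comp (list_flatMap (list_range.comp hgens)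
      (primrec_statement_genConstraints snd).to₂)
      (list_map hrels (primrec_statement_relConstraint snd).to₂))

theorem primrec_toCIInstance_wordPresentation (m : ℕ) (R : List (ℕ × ℕ × ℕ)) (z : ℕ) :
    Primrec fun v => (wordPresentation m R z v).toCIInstance := by
  have hlhs : Primrec fun v : List ℕ => m + v.length := nat_add.comp (const m) list_length
  refine primrec_toCIInstance (succ.comp hlhs) ?_ hlhs (const z)
  have hprefix : Primrec fun p : List ℕ × ℕ => m + p.2 := nat_add.comp (const m) snd
  have hsnoc : Primrec fun p : List ℕ × ℕ => (m + p.2 + 1, m + p.2, p.1.getD p.2 0) :=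
    (succ.comp hprefix).pair (hprefix.pair ((list_getD 0).comp fst snd))
  exact list_append.comp (const R) (list_cons.comp (const _)
    (list_map (list_range.comp list_length) hsnoc.to₂))

theorem exists_primrec_wordInstance {G : Type} [Finite G] (one z : G) (Rel : G → G → G → Prop) :
    ∃ (code : G → ℕ) (inst : List ℕ → CIInstance), Primrec inst ∧ ∀ w : List G,
      CIValid (inst (w.map code)) ∧ (Entails one Rel w z → CIHolds (inst (w.map code))) ∧
        (FinitelyRefuted one Rel w z → ¬ CIHolds (inst (w.map code))) := by
  obtain ⟨code, m, hcode, hone, hm⟩ := exists_numbering one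
  exact ⟨code, fun v => (wordPresentation m (codedRels code Rel) (code z) v).toCIInstance,
    primrec_toCIInstance_wordPresentation _ _ _, fun w =>
      ⟨(wellFormed_wordPresentation_codedRels hm).ciValid, fun hw => hw.ciHolds hm hone,
        fun hw => hw.not_ciHolds hm hone hcode⟩⟩

end Primrec

/-! ### Finite quotients of actions -/

section Collapse

variable {B : Type}

/-- The monoid of self-maps of `B` preserving the subset `I`. -/
def preservingEnd (I : Set B) : Submonoid (Function.End B) where
  carrier := {f | Set.MapsTo f I I}
  one_mem' := Set.mapsTo_id I
  mul_mem' hf hg := hf.comp hg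

/-- The projection to the quotient of `B` in which `I` is collapsed to the point `none`. -/
def collapsePoint (I : Set B) (x : B) : Option ↥Iᶜ :=
  if h : x ∈ Iᶜ then some ⟨x, h⟩ else none

theorem collapsePoint_of_mem {I : Set B} {x : B} (hx : x ∈ I) : collapsePoint I x = none :=
  dif_neg (not_not_intro hx)

theorem collapsePoint_of_notMem {I : Set B} {x : B} (hx : x ∉ I) :
    collapsePoint I x = some ⟨x, hx⟩ :=
  dif_pos hx

/-- The action on the quotient of `B` in which `I` is collapsed to a point. -/
def collapse (I : Set B) : preservingEnd I →* Function.End (Option ↥Iᶜ) where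
  toFun f o := o.bind fun x => collapsePoint I (f.1 x)
  map_one' := by
    funext o
    cases o with
    | none => rfl
    | some x => exact collapsePoint_of_notMem x.2
  map_mul' f g := by
    funext o
    obtain _ | x := o
    · rfl
    change collapsePoint I (f.1 (g.1 x)) = (collapsePoint I (g.1 x)).bind _
    by_cases hx : g.1 x ∈ I
    · rw [collapsePoint_of_mem hx, collapsePoint_of_mem (f.2 hx), Option.bind_none]
    · rw [collapsePoint_of_notMem hx, Option.bind_some]

theorem finitelyRefuted_of_action {G : Type} {one : G} {Rel : G → G → G → Prop}
    {φ : G → Function.End B} (hφ : IsModel one Rel φ) {I : Set B} (hfin : Iᶜ.Finite)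
    (hI : ∀ g, Set.MapsTo (φ g) I I) {w : List G} {z : G} {b : B} (hw : (w.map φ).prod b ∉ I)
    (hz : φ z b ∈ I) : FinitelyRefuted one Rel w z := by
  have := hfin.to_subtype
  let φI (g : G) : preservingEnd I := ⟨φ g, hI g⟩
  have hword : ((w.map φI).prod : Function.End B) = (w.map φ).prod := by
    rw [← (preservingEnd I).coe_subtype, map_list_prod, List.map_map]
    rfl
  have hb : b ∉ I := fun hb => hw (hword ▸ (w.map φI).prod.2 hb)
  refine ⟨Function.End (Option ↥Iᶜ), inferInstance, collapse I ∘ φI,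
    inferInstanceAs (Finite (Option ↥Iᶜ → Option ↥Iᶜ)), ⟨?_, fun k g h hrel => ?_⟩, ?_⟩
  · rw [Function.comp_apply, show φI one = 1 from Subtype.ext hφ.1, map_one]
  · simp only [Function.comp_apply]
    rw [show φI k = φI g * φI h from Subtype.ext (hφ.2 k g h hrel), map_mul]
  · rw [← List.map_map, ← map_list_prod, Function.comp_apply]
    intro heq
    have hpoint : collapsePoint I (((w.map φI).prod : Function.End B) b) =
        collapsePoint I (φ z b) := congrFun heq (some ⟨b, hb⟩)
    rw [hword, collapsePoint_of_notMem hw, collapsePoint_of_mem hz] at hpoint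
    cases hpoint

end Collapse

/-! ### Stack machines -/

section Stacks

variable {K A : Type}

/-- The total height of a family of stacks. -/
def stackSize [Fintype K] (S : K → List A) : ℕ :=
  ∑ k, (S k).length

theorem finite_stackSize_le [Fintype K] [Finite A] (N : ℕ) :
    {S : K → List A | stackSize S ≤ N}.Finite :=
  (Set.Finite.pi' fun _ : K => List.finite_length_le A N).subset fun S hS k =>
    (Finset.single_le_sum (f := fun k => (S k).length) (fun _ _ => Nat.zero_le _)
      (Finset.mem_univ k)).trans hS

variable [DecidableEq K]

/-- Push the letter `a.2`, if there is one, on the stack `a.1`. -/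
def pushOpt (a : Option (K × A)) (S : K → List A) : K → List A :=
  a.elim S fun l => Function.update S l.1 (l.2 :: S l.1)

/-- The stacks obtained from the empty ones by pushing the letters of a word, the last one
first. -/
def stacksOfWord (w : List (K × A)) : K → List A :=
  w.foldr (fun l => pushOpt (some l)) fun _ => []

theorem pushOpt_comm {l l' : K × A} (h : l.1 ≠ l'.1) (S : K → List A) :
    pushOpt (some l) (pushOpt (some l') S) = pushOpt (some l') (pushOpt (some l) S) := by
  simp only [pushOpt, Option.elim_some]
  rw [Function.update_of_ne h, Function.update_of_ne h.symm, Function.update_comm h]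

theorem stackSize_pushOpt_some [Fintype K] (l : K × A) (S : K → List A) :
    stackSize (pushOpt (some l) S) = stackSize S + 1 := by
  have hlength : ∀ k, (pushOpt (some l) S k).length = (S k).length + if k = l.1 then 1 else 0 := by
    intro k
    by_cases hk : k = l.1
    · subst hk
      simp [pushOpt]
    · simp [pushOpt, hk]
  simp only [stackSize, hlength, Finset.sum_add_distrib, Finset.sum_ite_eq', Finset.mem_univ,
    if_true]

theorem stackSize_le_pushOpt [Fintype K] (a : Option (K × A)) (S : K → List A) :
    stackSize S ≤ stackSize (pushOpt a S) := by
  cases a with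
  | none => rfl
  | some l => simp [stackSize_pushOpt_some]

theorem stackSize_pushOpt_le [Fintype K] (a : Option (K × A)) (S : K → List A) :
    stackSize (pushOpt a S) ≤ stackSize S + 1 := by
  cases a with
  | none => exact Nat.le_succ _
  | some l => rw [stackSize_pushOpt_some]

end Stacks

section Machine

variable {K A Q : Type}

/-- Configurations of a machine with states `Q` and stacks indexed by `K` over the alphabet `A`. -/
abbrev StackCfg (K A Q : Type) : Type :=
  Q × (K → List A)

/-- Generators of the monoid simulating a machine with states `Q`. The configuration `(q, S)` is
represented by the product of `run q` and the letters on the stacks; the unit is `push none`.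
Each step contributes a factor `tick`, and `zero` is the value of the rejecting configurations.
The generators `pushPair` and `runPush` name products of two others. -/
inductive MachineGen (K A Q : Type) : Type
  | push (a : Option (K × A))
  | pushPair (l l' : K × A)
  | run (q : Q)
  | runPush (q : Q) (a : Option (K × A))
  | tick
  | zero

instance MachineGen.finite [Finite K] [Finite A] [Finite Q] : Finite (MachineGen K A Q) := by
  let ofSum : Option (K × A) ⊕ ((K × A) × (K × A)) ⊕ Q ⊕ (Q × Option (K × A)) ⊕ Bool →
      MachineGen K A Q :=
    Sum.elim .push <| Sum.elim (fun p => .pushPair p.1 p.2) <| Sum.elim .run <|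
      Sum.elim (fun p => .runPush p.1 p.2) fun b => cond b .tick .zero
  refine Finite.of_surjective ofSum fun g => ?_
  cases g with
  | push a => exact ⟨.inl a, rfl⟩
  | pushPair l l' => exact ⟨.inr (.inl (l, l')), rfl⟩
  | run q => exact ⟨.inr (.inr (.inl q)), rfl⟩
  | runPush q a => exact ⟨.inr (.inr (.inr (.inl (q, a)))), rfl⟩
  | tick => exact ⟨.inr (.inr (.inr (.inr true))), rfl⟩
  | zero => exact ⟨.inr (.inr (.inr (.inr false))), rfl⟩

/-- The word representing the configuration with state `q` and stacks `stacksOfWord w`. -/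
def machineWord (q : Q) (w : List (K × A)) : List (MachineGen K A Q) :=
  .run q :: w.map fun l => .push (some l)

variable [DecidableEq K]

/-- In state `q`, the machine always replaces the letter `a` by the letter `b`, on a possibly
different stack, and moves to state `q'`. -/
def Rule (step : StackCfg K A Q → Option (StackCfg K A Q)) (a : Option (K × A)) (q : Q)
    (b : Option (K × A)) (q' : Q) : Prop :=
  ∀ S, step (q, pushOpt a S) = some (q', pushOpt b S)

/-- Every step of the machine is an instance of a rule. -/
def IsRuled (step : StackCfg K A Q → Option (StackCfg K A Q)) : Prop :=
  ∀ c d, step c = some d →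
    ∃ a b S, c.2 = pushOpt a S ∧ d.2 = pushOpt b S ∧ Rule step a c.1 b d.1

/-- The relations `k = g * h` of the monoid simulating a machine that rejects by entering the
state `qh` with the letter `lr` on top of its stack. The generators `run q` are restricted to the
states in `F`, so that there are finitely many of them. -/
inductive MachineRel (step : StackCfg K A Q → Option (StackCfg K A Q)) {F : Set Q} (qh : F)
    (lr : K × A) : MachineGen K A F → MachineGen K A F → MachineGen K A F → Prop
  | pushPair (l l') : MachineRel step qh lr (.pushPair l l') (.push (some l)) (.push (some l'))
  | pushPair_swap (l l') : l.1 ≠ l'.1 →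
      MachineRel step qh lr (.pushPair l l') (.push (some l')) (.push (some l))
  | runPush (q a) : MachineRel step qh lr (.runPush q a) (.run q) (.push a)
  | rule (a) (q : F) (b) (q' : F) : Rule step a q b q' →
      MachineRel step qh lr (.runPush q a) .tick (.runPush q' b)
  | reject : MachineRel step qh lr .zero (.run qh) (.push (some lr))
  | zero_push (l) : MachineRel step qh lr .zero .zero (.push (some l))
  | tick_zero : MachineRel step qh lr .zero .tick .zero

end Machine

section StackProd

variable {K A M : Type} [Monoid M] {ψ : K × A → M}

theorem commute_lift_lift (hψ : ∀ l l', l.1 ≠ l'.1 → Commute (ψ l) (ψ l')) :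
    Pairwise fun k k' : K => ∀ (u v : FreeMonoid A),
      Commute (FreeMonoid.lift (fun a => ψ (k, a)) u) (FreeMonoid.lift (fun a => ψ (k', a)) v) := by
  intro k k' hk u v
  simp only [FreeMonoid.lift_apply]
  refine .list_prod_left _ _ fun x hx => .list_prod_right _ _ fun y hy => ?_
  obtain ⟨a, -, rfl⟩ := List.mem_map.1 hx
  obtain ⟨a', -, rfl⟩ := List.mem_map.1 hy
  exact hψ _ _ hk

variable [Fintype K]

/-- The product of the values `ψ l` of all letters on the stacks `S`. Letters on different stacks
commute, and each stack is multiplied out from top to bottom. -/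
def stackProd (hψ : ∀ l l', l.1 ≠ l'.1 → Commute (ψ l) (ψ l')) (S : K → List A) : M :=
  MonoidHom.noncommPiCoprod (fun k => FreeMonoid.lift fun a => ψ (k, a)) (commute_lift_lift hψ)
    fun k => FreeMonoid.ofList (S k)

variable (hψ : ∀ l l', l.1 ≠ l'.1 → Commute (ψ l) (ψ l'))

theorem stackProd_empty : stackProd hψ (fun _ => []) = 1 :=
  map_one (MonoidHom.noncommPiCoprod _ (commute_lift_lift hψ))

theorem mul_stackProd_eq_self {z : M} (hz : ∀ l, z * ψ l = z) (S : K → List A) :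
    z * stackProd hψ S = z := by
  let fixing : Submonoid M :=
    { carrier := {m | z * m = z}
      one_mem' := mul_one z
      mul_mem' := fun {m n} hm hn => by
        rw [Set.mem_ofPred_eq] at hm hn ⊢
        rw [← mul_assoc, hm, hn] }
  have hle : MonoidHom.mrange (MonoidHom.noncommPiCoprod _ (commute_lift_lift hψ)) ≤ fixing := by
    rw [MonoidHom.noncommPiCoprod_mrange]
    refine iSup_le fun k => ?_
    rw [FreeMonoid.mrange_lift, Submonoid.closure_le]
    rintro _ ⟨a, rfl⟩
    exact hz (k, a)
  exact hle ⟨_, rfl⟩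

theorem stackProd_pushOpt_some [DecidableEq K] (l : K × A) (S : K → List A) :
    stackProd hψ (pushOpt (some l) S) = ψ l * stackProd hψ S := by
  have hpush : (fun k => FreeMonoid.ofList (pushOpt (some l) S k)) =
      Pi.mulSingle l.1 (FreeMonoid.of l.2) * fun k => FreeMonoid.ofList (S k) := by
    funext k
    by_cases hk : k = l.1
    · subst hk
      simp [pushOpt, FreeMonoid.ofList_cons]
    · simp [pushOpt, hk]
  rw [stackProd, hpush, map_mul, MonoidHom.noncommPiCoprod_mulSingle, FreeMonoid.lift_eval_of,
    stackProd]

theorem stackProd_stacksOfWord [DecidableEq K] (w : List (K × A)) :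
    stackProd hψ (stacksOfWord w) = (w.map ψ).prod := by
  induction w with
  | nil => exact stackProd_empty hψ
  | cons l w ih =>
    rw [List.map_cons, List.prod_cons, ← ih]
    exact stackProd_pushOpt_some hψ l _

end StackProd

section Soundness

variable {K A Q M : Type} [DecidableEq K] [Monoid M]
  {step : StackCfg K A Q → Option (StackCfg K A Q)} {F : Set Q} {qh : F} {lr : K × A}
  {γ : MachineGen K A F → M}

theorem IsModel.commute_push (hγ : IsModel (.push none) (MachineRel step qh lr) γ) (l l' : K × A)
    (hl : l.1 ≠ l'.1) : Commute (γ (.push (some l))) (γ (.push (some l'))) :=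
  (hγ.2 _ _ _ (.pushPair l l')).symm.trans (hγ.2 _ _ _ (.pushPair_swap l l' hl))

theorem IsModel.stackProd_pushOpt [Fintype K]
    (hγ : IsModel (.push none) (MachineRel step qh lr) γ) (a : Option (K × A)) (S : K → List A) :
    stackProd hγ.commute_push (pushOpt a S) = γ (.push a) * stackProd hγ.commute_push S := by
  cases a with
  | none => rw [hγ.1, one_mul, pushOpt, Option.elim_none]
  | some l => exact stackProd_pushOpt_some hγ.commute_push l S

theorem IsModel.run_mul_stackProd_of_step [Fintype K]
    (hγ : IsModel (.push none) (MachineRel step qh lr) γ) (hstep : IsRuled step) {q q' : F}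
    {S S' : K → List A} (h : step (q, S) = some (↑q', S')) :
    γ (.run q) * stackProd hγ.commute_push S =
      γ .tick * (γ (.run q') * stackProd hγ.commute_push S') := by
  obtain ⟨a, b, T, hS, hS', hrule⟩ := hstep _ _ h
  obtain rfl : S = pushOpt a T := hS
  obtain rfl : S' = pushOpt b T := hS'
  rw [hγ.stackProd_pushOpt, hγ.stackProd_pushOpt, ← mul_assoc, ← mul_assoc (γ (.run q')),
    ← hγ.2 _ _ _ (.runPush q a), ← hγ.2 _ _ _ (.runPush q' b), ← mul_assoc,
    hγ.2 _ _ _ (.rule a q b q' hrule)]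

theorem IsModel.run_mul_stackProd_of_reaches [Fintype K]
    (hγ : IsModel (.push none) (MachineRel step qh lr) γ) (hstep : IsRuled step)
    (hF : ∀ c d, step c = some d → c.1 ∈ F → d.1 ∈ F) {c : StackCfg K A Q} (hc : c.1 ∈ F)
    {S : K → List A} (h : StateTransition.Reaches step c (qh, pushOpt (some lr) S)) :
    γ (.run ⟨c.1, hc⟩) * stackProd hγ.commute_push c.2 = γ .zero := by
  induction h using Relation.ReflTransGen.head_induction_on with
  | refl =>
    rw [hγ.stackProd_pushOpt, ← mul_assoc, ← hγ.2 _ _ _ .reject]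
    exact mul_stackProd_eq_self _ (fun l => (hγ.2 _ _ _ (.zero_push l)).symm) S
  | @head c d hcd _ ih =>
    have hd : d.1 ∈ F := hF c d hcd hc
    rw [hγ.run_mul_stackProd_of_step hstep (q := ⟨c.1, hc⟩) (q' := ⟨d.1, hd⟩) hcd, ih hd,
      ← hγ.2 _ _ _ .tick_zero]

theorem entails_zero_of_reaches [Finite K] (hstep : IsRuled step)
    (hF : ∀ c d, step c = some d → c.1 ∈ F → d.1 ∈ F) {q : F} {w : List (K × A)}
    {S : K → List A}
    (h : StateTransition.Reaches step (q, stacksOfWord w) (qh, pushOpt (some lr) S)) :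
    Entails (.push none) (MachineRel step qh lr) (machineWord q w) .zero := by
  have := Fintype.ofFinite K
  intro M _ γ hγ
  rw [machineWord, List.map_cons, List.prod_cons, List.map_map,
    ← hγ.run_mul_stackProd_of_reaches hstep hF q.2 h, stackProd_stacksOfWord]
  rfl

end Soundness

/-! ### Hitting times -/

section HittingTime

variable {C : Type}

/-- The machine goes from the configuration `c` to `acc` in exactly `n` steps. -/
inductive ReachesIn (step : C → Option C) (acc : C) : ℕ → C → Prop
  | refl : ReachesIn step acc 0 acc
  | head {n c d} : step c = some d → ReachesIn step acc n d → ReachesIn step acc (n + 1) c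

variable {step : C → Option C} {acc c d : C} {n m : ℕ}

theorem ReachesIn.of_step (hacc : step acc = none) (hcd : step c = some d)
    (h : ReachesIn step acc n c) : ∃ m, n = m + 1 ∧ ReachesIn step acc m d := by
  cases h with
  | refl => rw [hacc] at hcd; cases hcd
  | head hcd' h =>
    rw [hcd] at hcd'
    cases hcd'
    exact ⟨_, rfl, h⟩

theorem ReachesIn.unique (hacc : step acc = none) (hn : ReachesIn step acc n c)
    (hm : ReachesIn step acc m c) : n = m := by
  induction hn generalizing m with
  | refl =>
    cases hm with
    | refl => rfl
    | head h _ => rw [hacc] at h; cases h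
  | head hcd _ ih =>
    obtain ⟨m, rfl, hd⟩ := hm.of_step hacc hcd
    rw [ih hd]

theorem exists_reachesIn_of_reaches (h : StateTransition.Reaches step c acc) :
    ∃ n, ReachesIn step acc n c := by
  induction h using Relation.ReflTransGen.head_induction_on with
  | refl => exact ⟨0, .refl⟩
  | head hcd _ ih =>
    obtain ⟨n, hn⟩ := ih
    exact ⟨n + 1, .head hcd hn⟩

/-- The number of steps from `c` to `acc`, if `acc` is reached. -/
def hitTime (step : C → Option C) (acc c : C) : Option ℕ :=
  if h : ∃ n, ReachesIn step acc n c then some h.choose else none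

theorem hitTime_eq_some_iff (hacc : step acc = none) :
    hitTime step acc c = some n ↔ ReachesIn step acc n c := by
  unfold hitTime
  split_ifs with h
  · rw [Option.some_inj]
    exact ⟨fun hn => hn ▸ h.choose_spec, fun hn => h.choose_spec.unique hacc hn⟩
  · exact ⟨nofun, fun hn => (h ⟨n, hn⟩).elim⟩

theorem hitTime_of_step (hacc : step acc = none) (hcd : step c = some d) :
    hitTime step acc c = (hitTime step acc d).map (· + 1) := by
  ext n
  simp only [Option.map_eq_some_iff, hitTime_eq_some_iff hacc]
  constructor
  · intro hn
    obtain ⟨m, rfl, hm⟩ := hn.of_step hacc hcd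
    exact ⟨m, hm, rfl⟩
  · rintro ⟨m, hm, rfl⟩
    exact .head hcd hm

theorem hitTime_eq_none_of_halted (hacc : step acc = none) (hc : step c = none) (hne : c ≠ acc) :
    hitTime step acc c = none := by
  rw [Option.eq_none_iff_forall_ne_some]
  intro n hn
  rw [hitTime_eq_some_iff hacc] at hn
  cases hn with
  | refl => exact hne rfl
  | head h _ => rw [hc] at h; cases h

end HittingTime

theorem ReachesIn.stackSize_le {K A Q : Type} [DecidableEq K] [Fintype K]
    {step : StackCfg K A Q → Option (StackCfg K A Q)} (hstep : IsRuled step)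
    {acc c : StackCfg K A Q} {n : ℕ} (h : ReachesIn step acc n c) :
    stackSize c.2 ≤ stackSize acc.2 + n := by
  induction h with
  | refl => rfl
  | @head n c d hcd _ ih =>
    obtain ⟨a, b, S, hc, hd, -⟩ := hstep c d hcd
    calc stackSize c.2 ≤ stackSize S + 1 := hc ▸ stackSize_pushOpt_le a S
      _ ≤ stackSize d.2 + 1 := by rw [hd]; gcongr; exact stackSize_le_pushOpt b S
      _ ≤ stackSize acc.2 + (n + 1) := by lia

/-! ### The countermodel of an accepting run -/

section Countermodel

/-- Points of an infinite set on which the generators of a machine monoid act. The pushing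
generators act on stacks, and `run q` sends the stacks `S` to the time the machine takes from
`(q, S)` to the accepting configuration; `time none` is an absorbing point. -/
inductive SimPoint (K A : Type) : Type
  | store (S : K → List A)
  | time (t : Option ℕ)

variable {K A Q : Type}

/-- The points that are too large to matter for a run of `T` steps from stacks of total height
at most `N`. -/
def SimPoint.large [Fintype K] (N T : ℕ) : Set (SimPoint K A) :=
  {x | match x with
    | .store S => N < stackSize S
    | .time t => ∀ n ∈ t, T < n}

theorem SimPoint.finite_compl_large [Fintype K] [Finite A] (N T : ℕ) :
    (SimPoint.large N T : Set (SimPoint K A))ᶜ.Finite := by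
  refine (((finite_stackSize_le N).image store).union
    ((Set.finite_Iic T).image fun n => time (some n))).subset fun x hx => ?_
  cases x with
  | store S => exact .inl ⟨S, not_lt.1 (show ¬ N < stackSize S from hx), rfl⟩
  | time t =>
    obtain ⟨n, rfl, hn⟩ : ∃ n ∈ t, n ≤ T := by simpa [large] using hx
    exact .inr ⟨n, hn, rfl⟩

/-- The action of `tick`. -/
def SimPoint.tick : SimPoint K A → SimPoint K A
  | .store _ => .time none
  | .time t => .time (t.map (· + 1))

theorem SimPoint.mapsTo_tick [Fintype K] (N T : ℕ) :
    Set.MapsTo (tick : SimPoint K A → SimPoint K A) (large N T) (large N T) := by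
  intro x hx
  cases x with
  | store S => exact nofun
  | time t =>
    cases t with
    | none => exact nofun
    | some n =>
      rintro _ ⟨⟩
      exact (hx n rfl).trans (Nat.lt_succ_self n)

variable [DecidableEq K]

/-- The action of `push a`. -/
def SimPoint.push : Option (K × A) → SimPoint K A → SimPoint K A
  | a, .store S => .store (pushOpt a S)
  | none, .time t => .time t
  | some _, .time _ => .time none

theorem SimPoint.mapsTo_push [Fintype K] (N T : ℕ) (a : Option (K × A)) :
    Set.MapsTo (push a) (large N T) (large N T) := by
  intro x hx
  cases x with
  | store S => exact hx.trans_le (stackSize_le_pushOpt a S)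
  | time t =>
    cases a with
    | none => exact hx
    | some l => exact nofun

variable (step : StackCfg K A Q → Option (StackCfg K A Q)) (acc : StackCfg K A Q)

/-- The action of `run q`. -/
def SimPoint.run (q : Q) : SimPoint K A → SimPoint K A
  | .store S => .time (hitTime step acc (q, S))
  | .time _ => .time none

/-- The action of the generators. -/
def SimPoint.act {F : Set Q} : MachineGen K A F → Function.End (SimPoint K A)
  | .push a => push a
  | .pushPair l l' => push (some l) ∘ push (some l')
  | .run q => run step acc q
  | .runPush q a => run step acc q ∘ push a
  | .tick => tick
  | .zero => fun _ => .time none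

variable {step acc} {F : Set Q} {qh : F} {lr : K × A}

theorem SimPoint.isModel_act (hacc : step acc = none) (hqh : ∀ S, step (↑qh, S) = none)
    (hlr : ∀ S, (↑qh, pushOpt (some lr) S) ≠ acc) :
    IsModel (.push none) (MachineRel step qh lr) (act step acc) := by
  refine ⟨?_, fun k g h hrel => ?_⟩
  · funext x
    cases x <;> rfl
  funext x
  cases hrel with
  | pushPair | runPush | zero_push | tick_zero => rfl
  | pushPair_swap l l' hl =>
    cases x with
    | store S => exact congrArg store (pushOpt_comm hl S)
    | time t => rfl
  | rule a q b q' hrule =>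
    cases x with
    | store S => exact congrArg time (hitTime_of_step hacc (hrule S))
    | time t => cases a <;> cases b <;> rfl
  | reject =>
    cases x with
    | store S => exact (congrArg time (hitTime_eq_none_of_halted hacc (hqh _) (hlr S))).symm
    | time t => rfl

variable [Fintype K]

theorem SimPoint.mapsTo_run (hstep : IsRuled step) (hacc : step acc = none) (T : ℕ) (q : Q) :
    Set.MapsTo (run step acc q) (large (stackSize acc.2 + T) T)
      (large (stackSize acc.2 + T) T) := by
  intro x hx
  cases x with
  | store S =>
    intro n hn
    have hsize : stackSize S ≤ stackSize acc.2 + n :=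
      ((hitTime_eq_some_iff hacc).1 hn).stackSize_le hstep
    have hlarge : stackSize acc.2 + T < stackSize S := hx
    lia
  | time t => exact nofun

theorem SimPoint.mapsTo_act (hstep : IsRuled step) (hacc : step acc = none) (T : ℕ)
    (g : MachineGen K A F) :
    Set.MapsTo (act step acc g) (large (stackSize acc.2 + T) T)
      (large (stackSize acc.2 + T) T) := by
  cases g with
  | push a => exact mapsTo_push _ _ a
  | pushPair l l' => exact (mapsTo_push _ _ _).comp (mapsTo_push _ _ _)
  | run q => exact mapsTo_run hstep hacc T q
  | runPush q a => exact (mapsTo_run hstep hacc T q).comp (mapsTo_push _ _ a)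
  | tick => exact mapsTo_tick _ _
  | zero => exact fun _ _ => nofun

end Countermodel

section MachineInstance

variable {K A Q : Type} [DecidableEq K] {step : StackCfg K A Q → Option (StackCfg K A Q)}
  {F : Set Q} {qh : F} {lr : K × A}

theorem SimPoint.prod_act_machineWord {acc : StackCfg K A Q} (q : F) (w : List (K × A)) :
    ((machineWord q w).map (act step acc)).prod (.store fun _ => []) =
      .time (hitTime step acc (q, stacksOfWord w)) := by
  have hpush : ((w.map fun l => MachineGen.push (Q := F) (some l)).map (act step acc)).prod
      (.store fun _ => []) = .store (stacksOfWord w) := by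
    induction w with
    | nil => rfl
    | cons l w ih => exact congrArg (push (some l)) ih
  exact congrArg (run step acc q) hpush

theorem finitelyRefuted_zero_of_reaches [Finite K] [Finite A] (hstep : IsRuled step)
    (hqh : ∀ S, step (↑qh, S) = none) {Sa : K → List A} (hSa : ∀ S, Sa ≠ pushOpt (some lr) S)
    {q : F} {w : List (K × A)}
    (h : StateTransition.Reaches step (q, stacksOfWord w) (qh, Sa)) :
    FinitelyRefuted (.push none) (MachineRel step qh lr) (machineWord q w) .zero := by
  have := Fintype.ofFinite K
  obtain ⟨T, hT⟩ := exists_reachesIn_of_reaches h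
  refine finitelyRefuted_of_action
    (SimPoint.isModel_act (hqh Sa) hqh fun S hS => hSa S (congrArg Prod.snd hS).symm)
    (SimPoint.finite_compl_large _ T) (SimPoint.mapsTo_act hstep (hqh Sa) T)
    (b := .store fun _ => []) ?_ nofun
  rw [SimPoint.prod_act_machineWord, (hitTime_eq_some_iff (hqh Sa)).2 hT]
  exact fun hlarge => (hlarge T rfl).false

theorem exists_primrec_machineInstance [Finite K] [Finite A] (hstep : IsRuled step)
    (hfin : F.Finite) (hF : ∀ c d, step c = some d → c.1 ∈ F → d.1 ∈ F)
    (hqh : ∀ S, step (↑qh, S) = none) {Sa : K → List A} (hSa : ∀ S, Sa ≠ pushOpt (some lr) S)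
    (q : F) :
    ∃ (code : K × A → ℕ) (inst : List ℕ → CIInstance), Primrec inst ∧ ∀ w : List (K × A),
      CIValid (inst (w.map code)) ∧
      ((∃ S, StateTransition.Reaches step (q, stacksOfWord w) (qh, pushOpt (some lr) S)) →
        CIHolds (inst (w.map code))) ∧
      (StateTransition.Reaches step (q, stacksOfWord w) (qh, Sa) →
        ¬ CIHolds (inst (w.map code))) := by
  have := hfin.to_subtype
  obtain ⟨code, inst, hprimrec, hinst⟩ := exists_primrec_wordInstance
    (.push none : MachineGen K A F) .zero (MachineRel step qh lr)
  refine ⟨fun l => code (.push (some l)), fun v => inst (code (.run q) :: v),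
    hprimrec.comp (Primrec.list_cons.comp (.const _) .id), fun w => ?_⟩
  obtain ⟨hvalid, hentails, hrefuted⟩ := hinst (machineWord q w)
  rw [machineWord, List.map_cons, List.map_map] at hvalid hentails hrefuted
  exact ⟨hvalid, fun ⟨S, hS⟩ => hentails (entails_zero_of_reaches hstep hF hS),
    fun h => hrefuted (finitelyRefuted_zero_of_reaches hstep hqh hSa h)⟩

end MachineInstance

/-! ### Small-step semantics of `TM2` machines -/

section SmallStep

open Turing

variable {K Γ Λ σ : Type}

/-- Stacks over `Γ` with an explicit bottom marker `none`, which makes emptiness visible to the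
rules of a stack machine. -/
def markBottoms (S : K → List Γ) : K → List (Option Γ) :=
  fun k => (S k).map some ++ [none]

theorem head?_markBottoms (S : K → List Γ) (k : K) :
    (markBottoms S k).head? = some (S k).head? := by
  rcases h : S k <;> simp [markBottoms, h]

/-- The states of the small-step machine whose statements occur in the code of the labels
in `L`. -/
def smallStates (M : Λ → TM2.Stmt (fun _ : K => Γ) Λ σ)
    (L : Finset Λ) : Set (TM2.Stmt (fun _ : K => Γ) Λ σ × σ) :=
  {q | q.1 = .halt ∨ some q.1 ∈ TM2.stmts M L}

theorem finite_smallStates [Finite σ] (M : Λ → TM2.Stmt (fun _ : K => Γ) Λ σ)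
    (L : Finset Λ) : (smallStates M L).Finite := by
  have hstmts : {q | q = .halt ∨ some q ∈ TM2.stmts M L}.Finite :=
    (Set.finite_singleton _).union <|
      (TM2.stmts M L).finite_toSet.preimage (Option.some_injective _).injOn
  exact (hstmts.prod Set.finite_univ).subset fun q hq => ⟨hq, trivial⟩

variable [DecidableEq K]

theorem eq_pushOpt_of_head? {A : Type} {S : K → List A} {k : K} {a : A}
    (h : (S k).head? = some a) :
    S = pushOpt (some (k, a)) (Function.update S k (S k).tail) := by
  obtain ⟨t, ht⟩ := List.head?_eq_some_iff.1 h
  simp only [pushOpt, Option.elim_some, Function.update_self, Function.update_idem, ht,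
    List.tail_cons]
  rw [← ht, Function.update_eq_self]

theorem pushOpt_some_self {A : Type} (S : K → List A) (k : K) (a : A) :
    pushOpt (some (k, a)) S k = a :: S k := by
  simp [pushOpt]

theorem update_markBottoms (S : K → List Γ) (k : K) (t : List Γ) :
    Function.update (markBottoms S) k (t.map some ++ [none]) =
      markBottoms (Function.update S k t) := by
  funext k'
  by_cases h : k' = k
  · subst h
    simp [markBottoms]
  · simp [markBottoms, h]

/-- A `TM2` machine as a stack machine that executes a single statement at a time. The stacks
have bottom markers, which are never removed. -/
def smallStep (M : Λ → TM2.Stmt (fun _ : K => Γ) Λ σ) :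
    StackCfg K (Option Γ) (TM2.Stmt (fun _ : K => Γ) Λ σ × σ) →
      Option (StackCfg K (Option Γ) (TM2.Stmt (fun _ : K => Γ) Λ σ × σ))
  | ((.push k f q, v), S) => some ((q, v), pushOpt (some (k, some (f v))) S)
  | ((.peek k f q, v), S) => (S k).head?.map fun a => ((q, f v a), S)
  | ((.pop k f q, v), S) => (S k).head?.map fun a =>
      ((q, f v a), if a.isSome then Function.update S k (S k).tail else S)
  | ((.load f q, v), S) => some ((q, f v), S)
  | ((.branch p q q', v), S) => some ((cond (p v) q q', v), S)
  | ((.goto l, v), S) => some ((M (l v), v), S)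
  | ((.halt, _), _) => none

variable (M : Λ → TM2.Stmt (fun _ : K => Γ) Λ σ)

theorem isRuled_smallStep : IsRuled (smallStep M) := by
  rintro ⟨⟨q, v⟩, S⟩ d h
  cases q with
  | halt => cases h
  | push k f q =>
    cases h
    exact ⟨none, some (k, some (f v)), S, rfl, rfl, fun _ => rfl⟩
  | load | branch | goto =>
    cases h
    exact ⟨none, none, S, rfl, rfl, fun _ => rfl⟩
  | peek k f q =>
    obtain ⟨a, ha, rfl⟩ := Option.map_eq_some_iff.1 h
    refine ⟨some (k, a), some (k, a), _, eq_pushOpt_of_head? ha, eq_pushOpt_of_head? ha,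
      fun T => ?_⟩
    rw [smallStep, pushOpt_some_self, List.head?_cons, Option.map_some]
  | pop k f q =>
    obtain ⟨a, ha, rfl⟩ := Option.map_eq_some_iff.1 h
    cases a with
    | none =>
      refine ⟨some (k, none), some (k, none), _, eq_pushOpt_of_head? ha, eq_pushOpt_of_head? ha,
        fun T => ?_⟩
      rw [smallStep, pushOpt_some_self, List.head?_cons, Option.map_some]
      rfl
    | some a =>
      refine ⟨some (k, some a), none, _, eq_pushOpt_of_head? ha, rfl, fun T => ?_⟩
      rw [smallStep, pushOpt_some_self, List.head?_cons, Option.map_some]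
      simp [pushOpt]

/-- The configuration of the small-step machine that corresponds to a configuration of a `TM2`
machine. -/
def smallCfg (c : TM2.Cfg (fun _ : K => Γ) Λ σ) :
    StackCfg K (Option Γ) (TM2.Stmt (fun _ : K => Γ) Λ σ × σ) :=
  ((c.l.elim .halt M, c.var), markBottoms c.stk)

theorem reaches_smallStep_stepAux (q : TM2.Stmt (fun _ : K => Γ) Λ σ) (v : σ)
    (S : K → List Γ) :
    StateTransition.Reaches (smallStep M) ((q, v), markBottoms S)
      (smallCfg M (TM2.stepAux q v S)) := by
  induction q generalizing v S with
  | halt => exact .refl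
  | goto l => exact .single rfl
  | load f q ih => exact .head rfl (ih (f v) S)
  | branch p q q' ih ih' =>
    refine .head rfl ?_
    rw [TM2.stepAux]
    cases p v
    · exact ih' v S
    · exact ih v S
  | push k f q ih =>
    refine .head (b := ((q, v), markBottoms (Function.update S k (f v :: S k)))) ?_ (ih _ _)
    rw [← update_markBottoms]
    rfl
  | peek k f q ih =>
    refine .head (b := ((q, f v (S k).head?), markBottoms S)) ?_ (ih _ S)
    simp only [smallStep, head?_markBottoms, Option.map_some, Option.mem_def]
  | pop k f q ih =>
    refine .head (b := ((q, f v (S k).head?), markBottoms (Function.update S k (S k).tail))) ?_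
      (ih _ _)
    simp only [smallStep, head?_markBottoms, Option.map_some, Option.mem_def]
    rw [← update_markBottoms]
    rcases h : S k <;> simp [markBottoms, h]

theorem reaches_smallStep {c d : TM2.Cfg (fun _ : K => Γ) Λ σ}
    (h : StateTransition.Reaches (TM2.step M) c d) :
    StateTransition.Reaches (smallStep M) (smallCfg M c) (smallCfg M d) := by
  refine Relation.ReflTransGen.lift' (smallCfg M) ?_ _ _ h
  intro c d hcd
  obtain ⟨_ | l, v, S⟩ := c
  · cases hcd
  · cases hcd
    exact reaches_smallStep_stepAux M (M l) v S

variable {M}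

theorem mem_stmts₁_of_smallStep {q q' : TM2.Stmt (fun _ : K => Γ) Λ σ} {v v' : σ}
    {S S' : K → List (Option Γ)} (h : smallStep M ((q, v), S) = some ((q', v'), S')) :
    q' ∈ TM2.stmts₁ q ∨ ∃ l, q = .goto l ∧ q' = M (l v) := by
  cases q with
  | halt => cases h
  | goto l =>
    cases h
    exact .inr ⟨l, rfl, rfl⟩
  | push | load =>
    cases h
    exact .inl (Finset.mem_insert_of_mem TM2.stmts₁_self)
  | branch p q₁ q₂ =>
    cases h
    left
    cases p v <;> simp [TM2.stmts₁, TM2.stmts₁_self]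
  | peek | pop =>
    obtain ⟨a, -, ⟨⟩⟩ := Option.map_eq_some_iff.1 h
    exact .inl (Finset.mem_insert_of_mem TM2.stmts₁_self)

theorem smallStep_mem_smallStates [Inhabited Λ] {L : Finset Λ} (hL : TM2.Supports M L)
    (c d : StackCfg K (Option Γ) (TM2.Stmt (fun _ : K => Γ) Λ σ × σ))
    (h : smallStep M c = some d) (hc : c.1 ∈ smallStates M L) : d.1 ∈ smallStates M L := by
  obtain ⟨⟨q, v⟩, S⟩ := c
  obtain ⟨⟨q', v'⟩, S'⟩ := d
  obtain rfl | hq : q = .halt ∨ some q ∈ TM2.stmts M L := hc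
  · cases h
  refine .inr ?_
  obtain hq' | ⟨l, rfl, rfl⟩ := mem_stmts₁_of_smallStep h
  · exact TM2.stmts_trans hq' hq
  · have hl : l v ∈ L := TM2.stmts_supportsStmt hL hq v
    exact Finset.some_mem_insertNone.2 (Finset.mem_biUnion.2 ⟨l v, hl, TM2.stmts₁_self⟩)

end SmallStep

/-! ### Instances attached to a partial recursive function -/

section CodeInstance

open Turing Turing.PartrecToTM2 Turing.ToPartrec

theorem finite_K' : Finite K' :=
  Set.finite_univ_iff.1 <| (Set.toFinite {.main, .rev, .aux, .stack}).subset fun k _ => by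
    cases k <;> simp

theorem trNat_two_pow (j : ℕ) : trNat (2 ^ j) = List.replicate j Γ'.bit0 ++ [Γ'.bit1] := by
  obtain ⟨p, hp, htr⟩ : ∃ p : PosNum, ((2 ^ j : ℕ) : Num) = Num.pos p ∧
      trPosNum p = List.replicate j Γ'.bit0 ++ [Γ'.bit1] := by
    induction j with
    | zero => exact ⟨PosNum.one, rfl, rfl⟩
    | succ j ih =>
      obtain ⟨p, hp, htr⟩ := ih
      refine ⟨p.bit0, ?_, by rw [trPosNum, htr, List.replicate_succ, List.cons_append]⟩
      rw [pow_succ, mul_two, Nat.cast_add, hp, Num.bit0_of_bit0]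
      rfl
  rw [trNat, hp, trNum, htr]

/-- The letters below the trailing zero bits of the input `2 ^ j`: the rest of the input on the
main stack, and the bottom markers of all stacks. -/
def inputSuffix : List (K' × Option Γ') :=
  [(.main, some .bit1), (.main, some .cons), (.main, none), (.rev, none), (.aux, none),
    (.stack, none)]

theorem stacksOfWord_input (j : ℕ) :
    stacksOfWord (List.replicate j (.main, some .bit0) ++ inputSuffix) =
      markBottoms (K'.elim (trList [2 ^ j]) [] [] []) := by
  have hword : stacksOfWord (List.replicate j (.main, some .bit0) ++ inputSuffix) =
      markBottoms (K'.elim (List.replicate j .bit0 ++ [.bit1, .cons]) [] [] []) := by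
    induction j with
    | zero =>
      funext k
      cases k <;> simp [stacksOfWord, inputSuffix, pushOpt, markBottoms]
    | succ j ih =>
      rw [List.replicate_succ, List.cons_append]
      refine (congrArg (pushOpt (some (.main, some .bit0))) ih).trans ?_
      funext k
      cases k <;> simp [pushOpt, markBottoms, List.replicate_succ]
  rw [hword]
  simp [trList, trNat_two_pow]

theorem primrec_map_input (code : K' × Option Γ' → ℕ) :
    Primrec fun j => (List.replicate j (K'.main, some Γ'.bit0) ++ inputSuffix).map code := by
  have hreplicate : Primrec fun j => (List.range j).map fun _ => code (K'.main, some Γ'.bit0) :=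
    Primrec.list_map Primrec.list_range (Primrec.const _).to₂
  refine (Primrec.list_append.comp hreplicate (.const (inputSuffix.map code))).of_eq fun j => ?_
  simp

theorem reaches_smallStep_of_mem_eval {c : Code} {u v : List ℕ} (h : v ∈ c.eval u) :
    StateTransition.Reaches (smallStep tr)
      ((tr (trNormal c .halt), none), markBottoms (K'.elim (trList u) [] [] []))
      ((.halt, none), markBottoms (K'.elim (trList v) [] [] [])) := by
  have hhalt : PartrecToTM2.halt v ∈ StateTransition.eval (TM2.step tr)
      (PartrecToTM2.init c u) := by
    rw [tr_eval]
    exact Part.mem_map _ h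
  exact reaches_smallStep tr (StateTransition.mem_eval.1 hhalt).1

theorem exists_primrec_codeInstance (c : Code) :
    ∃ inst : ℕ → CIInstance, Primrec inst ∧ ∀ j, CIValid (inst j) ∧
      ([0] ∈ c.eval [2 ^ j] → CIHolds (inst j)) ∧
      ([1] ∈ c.eval [2 ^ j] → ¬ CIHolds (inst j)) := by
  have := finite_K'
  let F := smallStates tr (codeSupp c .halt)
  have hF := @smallStep_mem_smallStates _ _ _ _ _ _ ⟨trNormal c .halt⟩ _ (tr_supports c .halt)
  have hstart : (tr (trNormal c .halt), none) ∈ F := .inr <| Finset.some_mem_insertNone.2 <|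
    Finset.mem_biUnion.2 ⟨_, codeSupp_self _ _ (trStmts₁_self _), TM2.stmts₁_self⟩
  have hzero : markBottoms (K'.elim (trList [0]) [] [] []) =
      pushOpt (some (.main, some .cons)) (markBottoms (K'.elim [] [] [] [])) := by
    funext k
    cases k <;> simp [markBottoms, pushOpt, trList]
  have hone : ∀ S, markBottoms (K'.elim (trList [1]) [] [] []) ≠
      pushOpt (some (.main, some .cons)) S := by
    intro S h
    have hmain := congrFun h .main
    have hbit : trNat 1 = [Γ'.bit1] := trNat_two_pow 0
    simp [markBottoms, pushOpt, trList, hbit] at hmain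
  obtain ⟨code, inst, hprimrec, hinst⟩ := exists_primrec_machineInstance (isRuled_smallStep tr)
    (qh := ⟨(.halt, none), .inl rfl⟩) (finite_smallStates tr _) hF (fun _ => rfl) hone
    ⟨_, hstart⟩
  refine ⟨_, hprimrec.comp (primrec_map_input code), fun j => ?_⟩
  obtain ⟨hvalid, hreject, haccept⟩ := hinst (List.replicate j (.main, some .bit0) ++ inputSuffix)
  rw [stacksOfWord_input] at hreject haccept
  refine ⟨hvalid, fun h => hreject ⟨markBottoms (K'.elim [] [] [] []), ?_⟩,
    fun h => haccept (reaches_smallStep_of_mem_eval h)⟩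
  rw [← hzero]
  exact reaches_smallStep_of_mem_eval h

end CodeInstance

/-! ### Recursive inseparability -/

/-- The diagonal function, with values truncated to `0` and `1`. -/
def diagonal (n : ℕ) : Part ℕ :=
  (Nat.Partrec.Code.eval (Denumerable.ofNat Nat.Partrec.Code n) n).map (min · 1)

theorem partrec_diagonal : Partrec diagonal :=
  (Nat.Partrec.Code.eval_part.comp (Computable.ofNat Nat.Partrec.Code) Computable.id).map
    (Primrec.nat_min.comp Primrec.snd (Primrec.const 1)).to_comp.to₂

theorem not_computable_of_separates_diagonal {f : ℕ → Bool}
    (hzero : ∀ n, 0 ∈ diagonal n → f n = true) (hone : ∀ n, 1 ∈ diagonal n → f n = false) :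
    ¬ Computable f := by
  intro hf
  obtain ⟨c, hc⟩ := Nat.Partrec.Code.exists_code.1 <| Partrec.nat_iff.1 <| Computable.partrec <|
    Computable.cond hf (Computable.const 1) (Computable.const 0)
  set n := Encodable.encode c with hn
  have hdiagonal : diagonal n = Part.some (cond (f n) 1 0) := by
    rw [diagonal, hn, Denumerable.ofNat_encode, hc, ← hn]
    cases h : f n <;> simp [h]
  cases h : f n with
  | false =>
    rw [h] at hdiagonal
    exact Bool.false_ne_true (h.symm.trans (hzero n (hdiagonal ▸ Part.mem_some 0)))
  | true =>
    rw [h] at hdiagonal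
    exact Bool.false_ne_true ((hone n (hdiagonal ▸ Part.mem_some 1)).symm.trans h)

theorem primrec_log (b : ℕ) : Primrec (Nat.log b) := by
  obtain hb | hb := le_or_gt b 1
  · exact (Primrec.const 0).of_eq fun n => (Nat.log_of_left_le_one hb n).symm
  have hpow : Primrec₂ ((· ^ ·) : ℕ → ℕ → ℕ) := Primrec₂.unpaired'.1 Nat.Primrec.pow
  have hle : PrimrecRel fun n j : ℕ => b ^ j ≤ n :=
    Primrec.nat_le.comp (hpow.comp (Primrec.const b) Primrec.snd) Primrec.fst
  refine (Primrec.nat_findGreatest Primrec.id hle).of_eq fun n => ?_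
  obtain rfl | hn := eq_or_ne n 0
  · simp
  · rw [Nat.findGreatest_eq_iff]
    exact ⟨Nat.log_le_self b n, fun _ => Nat.pow_log_le_self b hn, fun j hj _ =>
      not_le.2 (Nat.lt_pow_of_log_lt hb hj)⟩

/-- The argument is passed as a power of two because its representation on the stacks is then
a primitive recursive function of the exponent. -/
theorem exists_code_two_pow {f : ℕ →. ℕ} (hf : Partrec f) :
    ∃ c : Turing.ToPartrec.Code, ∀ j x, x ∈ f j → [x] ∈ c.eval [2 ^ j] := by
  obtain ⟨c, hc⟩ := Turing.ToPartrec.Code.exists_code <|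
    Nat.Partrec'.part_iff₁.2 (hf.comp (primrec_log 2).to_comp)
  refine ⟨c, fun j x hx => ?_⟩
  rw [show c.eval [2 ^ j] = _ from hc ⟨[2 ^ j], rfl⟩]
  refine Part.mem_map _ ?_
  change x ∈ f (Nat.log 2 (2 ^ j))
  rwa [Nat.log_pow Nat.one_lt_two]

/-- Theorem `undecide_ci`: the conditional independence implication
problem is undecidable: no computable function decides, for each valid instance, whether
the universally-quantified implication holds. -/
theorem undecidable_ci :
    ¬ ∃ f : CIInstance → Bool, Computable f ∧
      ∀ inst : CIInstance, CIValid inst → (f inst = true ↔ CIHolds inst) := by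
  rintro ⟨f, hf, hspec⟩
  obtain ⟨c, hc⟩ := exists_code_two_pow partrec_diagonal
  obtain ⟨inst, hprimrec, hinst⟩ := exists_primrec_codeInstance c
  refine not_computable_of_separates_diagonal (f := f ∘ inst) (fun n hn => ?_) (fun n hn => ?_)
    (hf.comp hprimrec.to_comp)
  · obtain ⟨hvalid, hholds, -⟩ := hinst n
    exact (hspec _ hvalid).2 (hholds (hc n 0 hn))
  · obtain ⟨hvalid, -, hfails⟩ := hinst n
    exact Bool.eq_false_iff.2 (mt (hspec _ hvalid).1 (hfails (hc n 1 hn)))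

end
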